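/- arXiv:math/0301142 — 4 statements merged into one kernel-verified Lean document; each statement's English description precedes it below -/
import Mathlib

section
/- Let C be a ℂ-linear additive category in which all Hom-spaces are finite-dimensional ℂ-vector spaces and every endomorphism ring is a semisimple ℂ-algebra. Then for every morphism f : X ⟶ Y there exists a morphism g : Y ⟶ X such that f∘g∘f = f (so that f∘g ∈ End(Y) and g∘f ∈ End(X) are idempotents). Moreover, if f is a monomorphism then g∘f = id_X, and if f is an epimorphism then f∘g = id_Y. -/
open CategoryTheory

theorem aux_regular {R : Type*} [Ring R] [IsSemisimpleRing R] (a : R) : ∃ s : R, a * (s * a) = a := by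
  obtain ⟨e, he, h⟩ := IsSemisimpleRing.ideal_eq_span_idempotent (Ideal.span {a})
  have h1 : a ∈ Ideal.span {e} := h ▸ Ideal.mem_span_singleton_self a
  have h2 : e ∈ Ideal.span {a} := h.symm ▸ Ideal.mem_span_singleton_self e
  obtain ⟨r, hr⟩ := Ideal.mem_span_singleton'.1 h1
  obtain ⟨s, hs⟩ := Ideal.mem_span_singleton'.1 h2
  refine ⟨s, ?_⟩
  rw [hs, ← hr, mul_assoc, he.eq]

/-- In a semisimple ℂ-category (ℂ-linear additive, finite-dimensional
Hom-spaces, semisimple endomorphism rings), every morphism `f : X ⟶ Y` admits a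
quasi-inverse `g : Y ⟶ X` with `f ∘ g ∘ f = f`; consequently `f ∘ g` and `g ∘ f` are
idempotents, and if `f` is monic then `g ∘ f = id`, while if `f` is epic then
`f ∘ g = id`. -/
theorem stmt_0 {C : Type*} [Category C] [Preadditive C] [Limits.HasFiniteBiproducts C]
    [Linear ℂ C]
    (hfd : ∀ X Y : C, FiniteDimensional ℂ (X ⟶ Y))
    (hss : ∀ X : C, IsSemisimpleRing (End X))
    {X Y : C} (f : X ⟶ Y) :
    ∃ g : Y ⟶ X, f ≫ g ≫ f = f ∧
      (g ≫ f) ≫ (g ≫ f) = g ≫ f ∧ (f ≫ g) ≫ (f ≫ g) = f ≫ g ∧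
      (Mono f → f ≫ g = 𝟙 X) ∧ (Epi f → g ≫ f = 𝟙 Y) := by
  have key : ∃ g : Y ⟶ X, f ≫ g ≫ f = f := by
    haveI := Limits.HasBinaryBiproducts.of_hasBinaryProducts (C := C)
    haveI := hss (X ⊞ Y)
    let a : X ⊞ Y ⟶ X ⊞ Y := Limits.biprod.fst ≫ f ≫ Limits.biprod.inr
    obtain ⟨s, hs⟩ := aux_regular (R := End (X ⊞ Y)) (End.of a)
    change (a ≫ (s : X ⊞ Y ⟶ X ⊞ Y)) ≫ a = a at hs
    refine ⟨Limits.biprod.inr ≫ (s : X ⊞ Y ⟶ X ⊞ Y) ≫ Limits.biprod.fst, ?_⟩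
    have h2 := congrArg (fun t => Limits.biprod.inl ≫ t ≫ Limits.biprod.snd) hs
    simpa [a] using h2
  obtain ⟨g, hg⟩ := key
  refine ⟨g, hg, ?_, ?_, ?_, ?_⟩
  · simp only [Category.assoc, hg]
  · rw [← Category.assoc, Category.assoc f g f, hg]
  · intro _
    rw [← cancel_mono f, Category.assoc, hg, Category.id_comp]
  · intro _
    rw [← cancel_epi f, hg, Category.comp_id]
end

section
/- Let C be a ℂ-linear monoidal category with finite biproducts in which all Hom-spaces are finite-dimensional and every endomorphism ring is a semisimple ℂ-algebra, let X be an object and N ≥ 1 an integer, and assume 𝟙 and X are simple, Hom(X^⊗m, X^⊗n) = 0 unless m ≡ n (mod N), and Hom(𝟙, X^⊗N) and Hom(X^⊗N, 𝟙) are one-dimensional. Then: (i) there exist morphisms ι : 𝟙 ⟶ X^⊗N and π : X^⊗N ⟶ 𝟙 with π∘ι = id_𝟙; and (ii) for any two such pairs, i.e. whenever π∘ι = id_𝟙 = π'∘ι', one has ι∘π = ι'∘π', so that Π := ι∘π is a canonical idempotent in End(X^⊗N) independent of the choice of ι and π. -/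
open CategoryTheory CategoryTheory.MonoidalCategory

/-- The `n`-th tensor power of an object `X`, with `X^⊗0 = 𝟙` and `X^⊗1 = X`. -/
def tp {C : Type*} [Category C] [MonoidalCategory C] (X : C) : ℕ → C
  | 0 => 𝟙_ C
  | 1 => X
  | (n + 2) => tp X (n + 1) ⊗ X

/-- A semisimple ring is von Neumann regular. -/
theorem exists_mul_mul_self_of_semisimple {R : Type*} [Ring R] [IsSemisimpleRing R] (F : R) :
    ∃ y : R, F * y * F = F := by
  obtain ⟨I, hI⟩ := exists_isCompl (Submodule.span R {F})
  have h1 : (1 : R) ∈ Submodule.span R {F} ⊔ I := by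
    rw [hI.sup_eq_top]; trivial
  obtain ⟨u, hu, b, hb, hub⟩ := Submodule.mem_sup.1 h1
  obtain ⟨a, rfl⟩ := Submodule.mem_span_singleton.1 hu
  refine ⟨a, ?_⟩
  have hb' : F * b = F - F * a * F := by
    have : b = 1 - a * F := by rw [← hub]; simp
    rw [this]; noncomm_ring
  have h2 : F * b ∈ I := I.smul_mem F hb
  have h3 : F * b ∈ Submodule.span R {F} := by
    rw [hb']
    exact Submodule.mem_span_singleton.2 ⟨1 - F * a, by simp [sub_mul]⟩
  have h4 : F * b = 0 := by
    have := Submodule.disjoint_def.1 hI.disjoint _ h3 h2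
    exact this
  rw [h4] at hb'
  exact (sub_eq_zero.1 hb'.symm).symm

/-- In a ℂ-linear monoidal category with finite biproducts,
finite-dimensional Hom-spaces and semisimple endomorphism rings, if `𝟙` and `X` are
simple, `Hom(X^⊗m, X^⊗n) = 0` unless `m ≡ n (mod N)`, and `Hom(𝟙, X^⊗N)` and
`Hom(X^⊗N, 𝟙)` are one-dimensional, then (i) there exist `ι : 𝟙 ⟶ X^⊗N` and
`π : X^⊗N ⟶ 𝟙` with `π ∘ ι = id`, and (ii) the idempotent `Π = ι ∘ π` is independent
of the choice of such a pair. -/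
theorem stmt_3 {C : Type*} [Category C] [MonoidalCategory C] [Preadditive C]
    [Limits.HasFiniteBiproducts C] [Linear ℂ C] [MonoidalPreadditive C]
    [MonoidalLinear ℂ C]
    (hfd : ∀ A B : C, FiniteDimensional ℂ (A ⟶ B))
    (hss : ∀ A : C, IsSemisimpleRing (End A))
    (X : C) (N : ℕ) (hN : 1 ≤ N)
    (hunit_simple : Module.finrank ℂ (End (𝟙_ C)) = 1)
    (hX_simple : Module.finrank ℂ (End X) = 1)
    (hvanish : ∀ m n : ℕ, ¬ m ≡ n [MOD N] → ∀ f : tp X m ⟶ tp X n, f = 0)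
    (hdim_into : Module.finrank ℂ (𝟙_ C ⟶ tp X N) = 1)
    (hdim_from : Module.finrank ℂ (tp X N ⟶ 𝟙_ C) = 1) :
    (∃ (ι : 𝟙_ C ⟶ tp X N) (π : tp X N ⟶ 𝟙_ C), ι ≫ π = 𝟙 (𝟙_ C)) ∧
      ∀ (ι ι' : 𝟙_ C ⟶ tp X N) (π π' : tp X N ⟶ 𝟙_ C),
        ι ≫ π = 𝟙 (𝟙_ C) → ι' ≫ π' = 𝟙 (𝟙_ C) → π ≫ ι = π' ≫ ι' := by
  have hid : (𝟙 (𝟙_ C)) ≠ 0 := by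
    intro h
    have h0 : ∀ f : End (𝟙_ C), f = 0 := fun f => by
      have : f = f ≫ 𝟙 (𝟙_ C) := (Category.comp_id _).symm
      rw [this, h]; exact Limits.comp_zero
    have : Subsingleton (End (𝟙_ C)) := ⟨fun a b => (h0 a).trans (h0 b).symm⟩
    rw [Module.finrank_zero_of_subsingleton] at hunit_simple
    exact absurd hunit_simple (by norm_num)
  constructor
  · obtain ⟨f, hf, -⟩ := finrank_eq_one_iff'.1 hdim_into
    have := Limits.hasBinaryBiproducts_of_finite_biproducts C
    have := hss (𝟙_ C ⊞ tp X N)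
    obtain ⟨y, hy⟩ := exists_mul_mul_self_of_semisimple
      (R := End (𝟙_ C ⊞ tp X N)) (Limits.biprod.fst ≫ f ≫ Limits.biprod.inr)
    let y' : (𝟙_ C ⊞ tp X N) ⟶ (𝟙_ C ⊞ tp X N) := y
    have hy' : (Limits.biprod.fst ≫ f ≫ Limits.biprod.inr) ≫ y' ≫
        (Limits.biprod.fst ≫ f ≫ Limits.biprod.inr) =
        (Limits.biprod.fst ≫ f ≫ Limits.biprod.inr : (𝟙_ C ⊞ tp X N) ⟶ (𝟙_ C ⊞ tp X N)) := hy
    have hg : f ≫ (Limits.biprod.inr ≫ y' ≫ Limits.biprod.fst) ≫ f = f := by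
      have := congrArg (fun t => Limits.biprod.inl ≫ t ≫ Limits.biprod.snd) hy'
      simpa using this
    set g : tp X N ⟶ 𝟙_ C := Limits.biprod.inr ≫ y' ≫ Limits.biprod.fst
    obtain ⟨c, hc⟩ := (finrank_eq_one_iff_of_nonzero' (K := ℂ) (V := End (𝟙_ C))
      (𝟙 (𝟙_ C)) hid).1 hunit_simple (f ≫ g)
    have hc' : f ≫ g = c • 𝟙 (𝟙_ C) := hc.symm
    have hc0 : c ≠ 0 := by
      rintro rfl
      apply hf
      rw [← hg, ← Category.assoc, hc', zero_smul, Limits.zero_comp]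
    refine ⟨f, c⁻¹ • g, ?_⟩
    rw [Linear.comp_smul, hc', smul_smul, inv_mul_cancel₀ hc0, one_smul]
  · intro ι ι' π π' h h'
    have hι : ι ≠ 0 := by
      rintro rfl
      exact hid (by rw [← h, Limits.zero_comp])
    have hπ : π ≠ 0 := by
      rintro rfl
      exact hid (by rw [← h, Limits.comp_zero])
    obtain ⟨a, rfl⟩ := (finrank_eq_one_iff_of_nonzero' ι hι).1 hdim_into ι'
    obtain ⟨b, rfl⟩ := (finrank_eq_one_iff_of_nonzero' π hπ).1 hdim_from π'
    rw [Linear.comp_smul, Linear.smul_comp, h, smul_smul] at h'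
    have hba : b * a = 1 := by
      have h2 : (b * a - 1) • 𝟙 (𝟙_ C) = 0 := by rw [sub_smul, h', one_smul, sub_self]
      exact sub_eq_zero.1 ((smul_eq_zero.1 h2).resolve_right hid)
    rw [Linear.comp_smul, Linear.smul_comp, smul_smul, mul_comm, hba, one_smul]
end

section
/- Let n ≥ 1 and let q be a nonzero complex number such that q² is not a primitive k-th root of unity for any k with 2 ≤ k ≤ n. Then the Iwahori–Hecke algebra H_n(q²) is isomorphic as a ℂ-algebra to the group algebra ℂ[S_n] of the symmetric group on n letters. -/
/-- The generator `T̃_i` of the Iwahori–Hecke algebra in the free algebra. -/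
def heckeT (n : ℕ) (i : Fin (n - 1)) : FreeAlgebra ℂ (Fin (n - 1)) :=
  FreeAlgebra.ι ℂ i

/-- The defining relations of the Iwahori–Hecke algebra `H_n(q²)`: the braid
relations together with the quadratic relations `T̃_i² = (q − q⁻¹)T̃_i + 1`. -/
inductive HeckeRel (q : ℂ) (n : ℕ) :
    FreeAlgebra ℂ (Fin (n - 1)) → FreeAlgebra ℂ (Fin (n - 1)) → Prop
  | braid (i j : Fin (n - 1)) (h : (i : ℕ) + 1 = (j : ℕ)) :
      HeckeRel q n (heckeT n i * heckeT n j * heckeT n i)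
        (heckeT n j * heckeT n i * heckeT n j)
  | comm (i j : Fin (n - 1)) (h : (i : ℕ) + 2 ≤ (j : ℕ)) :
      HeckeRel q n (heckeT n i * heckeT n j) (heckeT n j * heckeT n i)
  | quad (i : Fin (n - 1)) :
      HeckeRel q n (heckeT n i * heckeT n i) ((q - q⁻¹) • heckeT n i + 1)

/-- The Iwahori–Hecke algebra `H_n(q²)` of type `A_{n-1}`. -/
abbrev HeckeAlgebra (q : ℂ) (n : ℕ) := RingQuot (HeckeRel q n)

/-- The generator `T̃_i` of `H_n(q²)`. -/
noncomputable def HeckeAlgebra.T (q : ℂ) (n : ℕ) (i : Fin (n - 1)) : HeckeAlgebra q n :=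
  RingQuot.mkAlgHom ℂ (HeckeRel q n) (heckeT n i)

/-- content sequences -/
def GS (k : ℕ) (c : ℕ → ℤ) : Prop :=
  ∀ m < k, (m = 0 → c m = 0) ∧ (0 < m → ∃ p < m, c p = c m + 1 ∨ c p = c m - 1) ∧
    (∀ p < m, c p = c m →
      (∃ r, p < r ∧ r < m ∧ c r = c m + 1) ∧ (∃ r, p < r ∧ r < m ∧ c r = c m - 1))

def CS (k : ℕ) (c : ℕ → ℤ) : Prop :=
  ∀ m < k, (m = 0 → c m = 0) ∧ (0 < m → ∃ p < m, c p = c m + 1 ∨ c p = c m - 1)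

theorem GS.cs {k : ℕ} {c : ℕ → ℤ} (h : GS k c) : CS k c :=
  fun m hm => ⟨(h m hm).1, (h m hm).2.1⟩

theorem GS.mono {k l : ℕ} {c : ℕ → ℤ} (h : GS k c) (hl : l ≤ k) : GS l c :=
  fun m hm => h m (by omega)

theorem GS.congr {k : ℕ} {c d : ℕ → ℤ} (h : GS k c) (hcd : ∀ j < k, c j = d j) : GS k d := by
  intro m hm
  obtain ⟨h1, h2, h3⟩ := h m hm
  have em := hcd m hm
  refine ⟨fun h => by rw [← em]; exact h1 h, fun h => ?_, fun p hp hpm => ?_⟩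
  · obtain ⟨p, hp, h⟩ := h2 h
    exact ⟨p, hp, by rw [← em, ← hcd p (by omega)]; exact h⟩
  · obtain ⟨⟨r, a1, a2, a3⟩, ⟨s, b1, b2, b3⟩⟩ := h3 p hp (by rw [em, hcd p (by omega)]; exact hpm)
    exact ⟨⟨r, a1, a2, by rw [← em, ← hcd r (by omega)]; exact a3⟩,
      ⟨s, b1, b2, by rw [← em, ← hcd s (by omega)]; exact b3⟩⟩

theorem CS.between {k : ℕ} {c : ℕ → ℤ} (h : CS k c) :
    ∀ m < k, ∀ j : ℤ, (0 ≤ j ∧ j ≤ c m ∨ c m ≤ j ∧ j ≤ 0) → ∃ p ≤ m, c p = j := by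
  intro m
  induction m using Nat.strong_induction_on with
  | _ m ih =>
    intro hm j hj
    have h1 := (h m hm).1
    have h2 := (h m hm).2
    clear h
    by_cases hjm : j = c m
    · exact ⟨m, le_refl _, hjm.symm⟩
    rcases Nat.eq_zero_or_pos m with h0 | h0
    · have := h1 h0
      clear h1 h2 ih
      omega
    · obtain ⟨p, hp, hc⟩ := h2 h0
      clear h1 h2
      obtain ⟨r, hr, hrj⟩ := ih p hp (by omega) j (by omega)
      exact ⟨r, by omega, hrj⟩

theorem CS.bound {k : ℕ} {c : ℕ → ℤ} (h : CS k c) {m p : ℕ} (hm : m < k) (hp : p < k) :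
    c m - c p < k := by
  have hsub : Finset.Icc (c p) (c m) ⊆ (Finset.range k).image c := by
    intro j hj
    rw [Finset.mem_Icc] at hj
    rw [Finset.mem_image]
    rcases le_total 0 j with h0 | h0
    · obtain ⟨r, hr, e⟩ := h.between m hm j (by omega)
      exact ⟨r, Finset.mem_range.2 (by omega), e⟩
    · obtain ⟨r, hr, e⟩ := h.between p hp j (by omega)
      exact ⟨r, Finset.mem_range.2 (by omega), e⟩
  have := (Finset.card_le_card hsub).trans Finset.card_image_le
  rw [Int.card_Icc, Finset.card_range] at this
  omega

theorem GS.bound {k : ℕ} {c : ℕ → ℤ} (h : GS k c) {m p : ℕ} (hm : m < k) (hp : p < k) :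
    |c m - c p| < k := by
  rw [abs_lt]
  have h1 := h.cs.bound hm hp
  have h2 := h.cs.bound hp hm
  omega

theorem upd_lt {c : ℕ → ℤ} {k j : ℕ} {b : ℤ} (h : j < k) : Function.update c k b j = c j :=
  Function.update_of_ne (by omega) _ _

theorem upd_eq {c : ℕ → ℤ} {k : ℕ} {b : ℤ} : Function.update c k b k = b :=
  Function.update_self _ _ _

theorem GS.next_bound {k : ℕ} {c : ℕ → ℤ} {a b : ℤ} (ha : GS (k + 1) (Function.update c k a))
    (hb : GS (k + 1) (Function.update c k b)) : |a - b| ≤ k + 1 := by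
  rcases Nat.eq_zero_or_pos k with h0 | h0
  · subst h0
    have h1 := (ha 0 (by omega)).1 rfl
    have h2 := (hb 0 (by omega)).1 rfl
    rw [upd_eq] at h1 h2
    simp [h1, h2]
  have key : CS (k + 2) (Function.update (Function.update c k a) (k + 1) b) := by
    intro m hm
    refine ⟨fun h => ?_, fun h => ?_⟩
    · rw [upd_lt (by omega)]
      exact (ha m (by omega)).1 h
    · rcases Nat.lt_or_ge m (k + 1) with hmk | hmk
      · obtain ⟨p, hp, hh⟩ := (ha m hmk).2.1 h
        exact ⟨p, hp, by rw [upd_lt (by omega), upd_lt (by omega : m < k + 1)]; exact hh⟩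
      · obtain rfl : m = k + 1 := by omega
        obtain ⟨p, hp, hh⟩ := (hb k (by omega)).2.1 h0
        rw [upd_eq, upd_lt hp] at hh
        refine ⟨p, by omega, ?_⟩
        rw [upd_eq, upd_lt (by omega), upd_lt hp]
        exact hh
  have h1 := key.bound (m := k) (p := k + 1) (by omega) (by omega)
  have h2 := key.bound (m := k + 1) (p := k) (by omega) (by omega)
  rw [upd_eq, upd_lt (by omega : k < k + 1), upd_eq] at h1 h2
  rw [abs_le]
  push_cast at h1 h2
  omega

/-- last occurrence -/
theorem exists_last {P : ℕ → Prop} {k p : ℕ} (hp : p < k) (h : P p) :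
    ∃ r < k, P r ∧ ∀ s, r < s → s < k → ¬ P s := by
  classical
  refine ⟨Nat.findGreatest P (k - 1), ?_, ?_, ?_⟩
  · have := Nat.findGreatest_le (P := P) (k - 1)
    omega
  · exact Nat.findGreatest_spec (m := p) (by omega) h
  · intro s hs hk
    exact Nat.findGreatest_is_greatest hs (by omega)

theorem GS.adj {k : ℕ} {c : ℕ → ℤ} {a : ℤ} (ha : GS (k + 1) (Function.update c k a))
    (hb : GS (k + 1) (Function.update c k (a + 1))) : False := by
  have hak := ha k (by omega)
  have hbk := hb k (by omega)
  simp only [upd_eq] at hak hbk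
  obtain ⟨a1, a2, a3⟩ := hak
  obtain ⟨b1, b2, b3⟩ := hbk
  rcases Nat.eq_zero_or_pos k with h0 | h0
  · have := a1 h0
    have := b1 h0
    omega
  have a3' : ∀ p < k, c p = a → ∃ r, p < r ∧ r < k ∧ c r = a + 1 := by
    intro p hp h
    obtain ⟨r, h1, h2, h3⟩ := (a3 p hp (by rw [upd_lt hp]; exact h)).1
    exact ⟨r, h1, h2, by rwa [upd_lt h2] at h3⟩
  have b3' : ∀ p < k, c p = a + 1 → ∃ r, p < r ∧ r < k ∧ c r = a := by
    intro p hp h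
    obtain ⟨r, h1, h2, h3⟩ := (b3 p hp (by rw [upd_lt hp]; exact h)).2
    exact ⟨r, h1, h2, by rw [upd_lt h2] at h3; omega⟩
  have na : ∀ p < k, c p ≠ a := by
    intro p hp h
    obtain ⟨r, hr, e, hl⟩ := exists_last (P := fun j => c j = a) hp h
    obtain ⟨s, h1, h2, h3⟩ := a3' r hr e
    obtain ⟨t, h4, h5, h6⟩ := b3' s h2 h3
    exact hl t (by omega) h5 h6
  have nb : ∀ p < k, c p ≠ a + 1 := by
    intro p hp h
    obtain ⟨r, h1, h2, h3⟩ := b3' p hp h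
    exact na r h2 h3
  obtain ⟨p, hp, hpp⟩ := a2 h0
  obtain ⟨r, hr, hrr⟩ := b2 h0
  rw [upd_lt hp] at hpp
  rw [upd_lt hr] at hrr
  have e1 := nb p hp
  have e2 := na r hr
  have hc : CS k c := by
    have := (ha.mono (Nat.le_succ k)).congr (d := c) (fun j hj => upd_lt hj)
    exact this.cs
  rcases le_total 0 a with h | h
  · obtain ⟨s, hs, es⟩ := hc.between r hr a (by omega)
    exact na s (by omega) es
  · obtain ⟨s, hs, es⟩ := hc.between p hp a (by omega)
    exact na s (by omega) es

def sw (i : ℕ) (c : ℕ → ℤ) : ℕ → ℤ := fun j => c (Equiv.swap i (i + 1) j)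

theorem sw_left (i : ℕ) (c : ℕ → ℤ) : sw i c i = c (i + 1) := by simp [sw]
theorem sw_right (i : ℕ) (c : ℕ → ℤ) : sw i c (i + 1) = c i := by simp [sw]
theorem sw_ne {i j : ℕ} (c : ℕ → ℤ) (h1 : j ≠ i) (h2 : j ≠ i + 1) : sw i c j = c j := by
  simp [sw, Equiv.swap_apply_of_ne_of_ne h1 h2]
theorem sw_sw (i : ℕ) (c : ℕ → ℤ) : sw i (sw i c) = c := by
  funext j; simp [sw]

theorem swap_lt_iff {c : ℕ → ℤ} {p i j : ℕ} (hd : 2 ≤ |c p - c (p + 1)|) (hij : |c i - c j| ≤ 1) :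
    Equiv.swap p (p + 1) i < Equiv.swap p (p + 1) j ↔ i < j := by
  have key : ¬ (i = p ∧ j = p + 1) ∧ ¬ (i = p + 1 ∧ j = p) := by
    refine ⟨?_, ?_⟩
    · rintro ⟨rfl, rfl⟩; omega
    · rintro ⟨rfl, rfl⟩; rw [abs_sub_comm] at hij; omega
  simp only [Equiv.swap_apply_def]
  split_ifs <;> omega

theorem GS.swap {k p : ℕ} {c : ℕ → ℤ} (h : GS k c) (hp : p + 1 < k)
    (hd : 2 ≤ |c p - c (p + 1)|) : GS k (sw p c) := by
  have hp0 : 0 < p := by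
    by_contra h0
    obtain rfl : p = 0 := by omega
    have h1 := (h 0 (by omega)).1 rfl
    obtain ⟨r, hr, hh⟩ := (h 1 (by omega)).2.1 (by omega)
    obtain rfl : r = 0 := by omega
    have : |c 0 - c (0 + 1)| ≤ 1 := by rw [abs_le]; simp only [zero_add]; omega
    omega
  have hk : ∀ m, Equiv.swap p (p + 1) m < k ↔ m < k := by
    intro m
    simp only [Equiv.swap_apply_def]
    split_ifs <;> omega
  have h0 : ∀ m, Equiv.swap p (p + 1) m = 0 ↔ m = 0 := by
    intro m
    rw [Equiv.swap_apply_def]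
    constructor <;> intro hh <;> split_ifs at * <;> omega
  have hss : ∀ m, Equiv.swap p (p + 1) (Equiv.swap p (p + 1) m) = m := fun m =>
    Equiv.swap_apply_self _ _ _
  intro m hm
  obtain ⟨h1, h2, h3⟩ := h (Equiv.swap p (p + 1) m) ((hk m).2 hm)
  refine ⟨fun e => h1 ((h0 m).2 e), fun e => ?_, fun r hr e => ?_⟩
  · obtain ⟨r, hr, hh⟩ := h2 (Nat.pos_of_ne_zero fun e' => by have := (h0 m).1 e'; omega)
    refine ⟨Equiv.swap p (p + 1) r, ?_, ?_⟩
    · have := (swap_lt_iff (i := r) (j := Equiv.swap p (p + 1) m) hd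
        (by rw [abs_le]; omega)).2 hr
      rwa [hss] at this
    · simp only [sw, hss]
      exact hh
  · simp only [sw] at e ⊢
    have hlt : Equiv.swap p (p + 1) r < Equiv.swap p (p + 1) m := by
      have := swap_lt_iff (i := Equiv.swap p (p + 1) r) (j := Equiv.swap p (p + 1) m) hd
          (by rw [e]; simp)
      rw [hss, hss] at this
      exact this.1 hr
    obtain ⟨⟨s, a1, a2, a3⟩, ⟨t, b1, b2, b3⟩⟩ := h3 _ hlt e
    clear h1 h2 h3 h
    refine ⟨⟨Equiv.swap p (p + 1) s, ?_, ?_, by rw [hss]; exact a3⟩,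
      ⟨Equiv.swap p (p + 1) t, ?_, ?_, by rw [hss]; exact b3⟩⟩
    · have := (swap_lt_iff (j := s) (i := Equiv.swap p (p + 1) r) hd
        (by rw [abs_le]; omega)).2 a1
      rwa [hss] at this
    · have := (swap_lt_iff (i := s) (j := Equiv.swap p (p + 1) m) hd
        (by rw [abs_le]; omega)).2 a2
      rwa [hss] at this
    · have := (swap_lt_iff (j := t) (i := Equiv.swap p (p + 1) r) hd
        (by rw [abs_le]; omega)).2 b1
      rwa [hss] at this
    · have := (swap_lt_iff (i := t) (j := Equiv.swap p (p + 1) m) hd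
        (by rw [abs_le]; omega)).2 b2
      rwa [hss] at this

theorem GS.extend {k : ℕ} {c : ℕ → ℤ} {b : ℤ} (h : GS (k + 1) c)
    (hb : GS (k + 1) (Function.update c k b)) (hk : 0 < k) (hne : b ≠ c k) :
    GS (k + 2) (Function.update c (k + 1) b) := by
  intro m hm
  rcases Nat.lt_or_ge m (k + 1) with hmk | hmk
  · exact (h.congr (d := Function.update c (k + 1) b) (fun j hj => (upd_lt hj).symm)) m hmk
  obtain rfl : m = k + 1 := by omega
  obtain ⟨h1, h2, h3⟩ := hb k (by omega)
  simp only [upd_eq] at h1 h2 h3 ⊢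
  refine ⟨by omega, fun _ => ?_, fun p hp e => ?_⟩
  · obtain ⟨p, hp, e⟩ := h2 hk
    rw [upd_lt hp] at e
    exact ⟨p, by omega, by rw [upd_lt (by omega)]; exact e⟩
  · rw [upd_lt hp] at e
    have hpk : p < k := by
      rcases Nat.lt_or_ge p k with h | h
      · exact h
      · obtain rfl : p = k := by omega
        exact absurd e.symm hne
    obtain ⟨⟨s, a1, a2, a3⟩, ⟨t, b1, b2, b3⟩⟩ := h3 p hpk (by rw [upd_lt hpk]; exact e)
    rw [upd_lt a2] at a3
    rw [upd_lt b2] at b3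
    exact ⟨⟨s, a1, by omega, by rw [upd_lt (by omega)]; exact a3⟩,
      ⟨t, b1, by omega, by rw [upd_lt (by omega)]; exact b3⟩⟩

theorem GS.extend_adj {k : ℕ} {c : ℕ → ℤ} {ε : ℤ} (hε : ε = 1 ∨ ε = -1) (h : GS (k + 1) c)
    (hn : ¬ GS (k + 2) (Function.update c (k + 1) (c k + ε))) :
    ∃ p < k, c p = c k + ε ∧ ∀ r, p < r → r < k → c r ≠ c k ∧ c r ≠ c k + ε ∧
      c r ≠ c k + 2 * ε := by
  by_contra hcon
  push Not at hcon
  apply hn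
  intro m hm
  rcases Nat.lt_or_ge m (k + 1) with hmk | hmk
  · exact (h.congr (d := Function.update c (k + 1) _) (fun j hj => (upd_lt hj).symm)) m hmk
  obtain rfl : m = k + 1 := by omega
  simp only [upd_eq]
  refine ⟨by omega, fun _ => ⟨k, by omega, ?_⟩, fun p hp e => ?_⟩
  · rw [upd_lt (by omega)]; omega
  rw [upd_lt hp] at e
  have hpk : p < k := by
    rcases Nat.lt_or_ge p k with h | h
    · exact h
    · obtain rfl : p = k := by omega
      omega
  obtain ⟨r, hr, er, hl⟩ := exists_last (P := fun j => c j = c k + ε) hpk e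
  obtain ⟨s, hs1, hs2, hs3⟩ := hcon r hr er
  have hpr : p ≤ r := by
    by_contra h'
    exact hl p (by omega) hpk e
  -- no c k after r
  have hnk : ∀ s, r < s → s < k → c s ≠ c k := by
    intro s h1 h2 h3
    obtain ⟨⟨u, a1, a2, a3⟩, ⟨t, b1, b2, b3⟩⟩ := (h k (by omega)).2.2 s h2 h3
    rcases hε with rfl | rfl
    · exact hl u (by omega) a2 a3
    · exact hl t (by omega) b2 b3
  have e2 := hs3 (hnk s hs1 hs2) (hl s hs1 hs2)
  have w1 : Function.update c (k + 1) (c k + ε) k = c k := upd_lt (by omega)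
  have w2 : Function.update c (k + 1) (c k + ε) s = c s := upd_lt (by omega)
  rcases hε with rfl | rfl
  · exact ⟨⟨s, by omega, by omega, by rw [w2]; omega⟩, ⟨k, by omega, by omega, by rw [w1]; omega⟩⟩
  · exact ⟨⟨k, by omega, by omega, by rw [w1]; omega⟩, ⟨s, by omega, by omega, by rw [w2]; omega⟩⟩

noncomputable section

def zc (q : ℂ) (c : ℤ) : ℂ := if q ^ 2 = 1 then q * c else (q ^ (2 * c) - 1) / (q - q⁻¹)

theorem hq_ne {q : ℂ} (hq : q ≠ 0) (h : q ^ 2 ≠ 1) : q - q⁻¹ ≠ 0 := by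
  intro h'
  apply h
  field_simp at h'
  linear_combination h'

theorem hq_eq {q : ℂ} (hq : q ≠ 0) (h : q ^ 2 = 1) : q - q⁻¹ = 0 := by
  field_simp
  linear_combination h

theorem zpow_two_mul' (q : ℂ) (c : ℤ) : q ^ (2 * c) = (q ^ 2) ^ c := by
  rw [zpow_mul]; norm_cast

theorem zc_hq {q : ℂ} (hq : q ≠ 0) (c : ℤ) : 1 + (q - q⁻¹) * zc q c = q ^ (2 * c) := by
  unfold zc
  split_ifs with h
  · rw [hq_eq hq h, zpow_two_mul', h]; simp
  · rw [mul_div_cancel₀ _ (hq_ne hq h)]; ring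

theorem zc_sub {q : ℂ} (hq : q ≠ 0) (c d : ℤ) :
    zc q c - zc q d = q ^ (2 * d) * zc q (c - d) := by
  unfold zc
  split_ifs with h
  · rw [zpow_two_mul' q d, h]; push_cast; simp; ring
  · have e : q ^ (2 * c) = q ^ (2 * d) * q ^ (2 * (c - d)) := by
      rw [← zpow_add₀ hq]; congr 1; ring
    rw [e]; ring

theorem zc_zero (q : ℂ) : zc q 0 = 0 := by simp [zc]

theorem zc_one {q : ℂ} (hq : q ≠ 0) : zc q 1 = q := by
  unfold zc
  split_ifs with h
  · simp
  · rw [div_eq_iff (hq_ne hq h)]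
    simp only [mul_one]
    rw [mul_sub, mul_inv_cancel₀ hq]
    norm_cast; ring

theorem zc_neg {q : ℂ} (hq : q ≠ 0) (c : ℤ) : zc q c = - q ^ (2 * c) * zc q (-c) := by
  have := zc_sub hq 0 c
  rw [zc_zero] at this
  simp only [zero_sub] at this
  linear_combination -this

structure GQ (q : ℂ) (n : ℕ) : Prop where
  ne : q ≠ 0
  nz : ∀ m : ℤ, m ≠ 0 → |m| ≤ n → zc q m ≠ 0

theorem GQ.inj {q : ℂ} {n : ℕ} (h : GQ q n) {a b : ℤ} (hab : |a - b| ≤ n)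
    (e : zc q a = zc q b) : a = b := by
  by_contra hne
  have := zc_sub h.ne a b
  rw [e, sub_self] at this
  rcases mul_eq_zero.1 this.symm with h1 | h1
  · exact zpow_ne_zero _ h.ne h1
  · exact h.nz _ (by omega) hab h1

theorem GQ.of_root {q : ℂ} {n : ℕ} (hq : q ≠ 0)
    (hroot : ∀ k : ℕ, 2 ≤ k → k ≤ n → ¬ IsPrimitiveRoot (q ^ 2) k) : GQ q n := by
  have key : ∀ m : ℕ, 0 < m → m ≤ n → zc q m ≠ 0 := by
    intro m hm hmn h0
    have h1 := zc_hq hq m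
    rw [h0, mul_zero, add_zero, zpow_two_mul'] at h1
    have h2 : (q ^ 2) ^ m = 1 := by rw [h1]; norm_cast
    have h3 := orderOf_dvd_of_pow_eq_one h2
    have h4 := Nat.le_of_dvd hm h3
    have h5 := orderOf_pos_iff.2 (isOfFinOrder_iff_pow_eq_one.2 ⟨m, hm, h2⟩)
    rcases Nat.lt_or_ge (orderOf (q ^ 2)) 2 with h6 | h6
    · have h7 : orderOf (q ^ 2) = 1 := by omega
      rw [orderOf_eq_one_iff] at h7
      unfold zc at h0
      rw [if_pos h7] at h0
      simp [hq] at h0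
      omega
    · exact hroot _ h6 (by omega) (IsPrimitiveRoot.orderOf _)
  refine ⟨hq, fun m hm hmn h0 => ?_⟩
  rcases lt_trichotomy m 0 with h | h | h
  · obtain ⟨k, rfl⟩ : ∃ k : ℕ, m = -k := ⟨m.natAbs, by omega⟩
    refine key k (by omega) (by rw [abs_neg] at hmn; simpa using hmn) ?_
    have := zc_neg hq k
    rw [h0] at this
    simpa using this
  · exact hm h
  · obtain ⟨k, rfl⟩ : ∃ k : ℕ, m = k := ⟨m.natAbs, by omega⟩
    exact key k (by omega) (by simpa using hmn) h0

theorem GQ.one (n : ℕ) : GQ 1 n := by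
  refine ⟨one_ne_zero, fun m hm _ => ?_⟩
  simp [zc, hm]

variable {A : Type*} [Ring A] [Algebra ℂ A]

structure HS (q : ℂ) (n : ℕ) (T : ℕ → A) : Prop where
  quad : ∀ i, i + 1 < n → T i * T i = (q - q⁻¹) • T i + 1
  braid : ∀ i, i + 2 < n → T i * T (i + 1) * T i = T (i + 1) * T i * T (i + 1)
  comm : ∀ i j, i + 2 ≤ j → j + 1 < n → T i * T j = T j * T i

def jm (T : ℕ → A) : ℕ → A
  | 0 => 0
  | i + 1 => T i * jm T i * T i + T i

theorem HS.comm_hi {q : ℂ} {n : ℕ} {T : ℕ → A} (H : HS q n T) {i j : ℕ} (hij : i < j)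
    (hj : j + 1 < n) : Commute (T j) (jm T i) := by
  induction i with
  | zero => exact Commute.zero_right _
  | succ i ih =>
    have h1 : Commute (T j) (T i) := (H.comm i j (by omega) hj).symm
    exact ((h1.mul_right (ih (by omega))).mul_right h1).add_right h1

theorem HS.comm_lo {q : ℂ} {n : ℕ} {T : ℕ → A} (H : HS q n T) {i j : ℕ} (hij : j + 2 ≤ i)
    (hi : i < n) : Commute (T j) (jm T i) := by
  induction i, hij using Nat.le_induction with
  | base =>
    show T j * (T (j + 1) * (T j * jm T j * T j + T j) * T (j + 1) + T (j + 1)) =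
      (T (j + 1) * (T j * jm T j * T j + T j) * T (j + 1) + T (j + 1)) * T j
    have hx := (H.comm_hi (i := j) (j := j + 1) (by omega) (by omega)).eq
    have hb := H.braid j (by omega)
    have hq1 := H.quad j (by omega)
    have hq2 := H.quad (j + 1) (by omega)
    generalize jm T j = x at *
    generalize T (j + 1) = b at *
    generalize T j = a at *
    have e1 : a * (b * (a * x * a) * b) = (b * (a * x * a) * b) * a := by
      calc a * (b * (a * x * a) * b) = (a * b * a) * x * a * b := by noncomm_ring
        _ = b * a * (b * x) * a * b := by rw [hb]; noncomm_ring
        _ = b * a * x * (b * a * b) := by rw [hx]; noncomm_ring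
        _ = _ := by rw [← hb]; noncomm_ring
    have e2 : a * (b * a * b) = (q - q⁻¹) • (b * a * b) + b * a := by
      calc a * (b * a * b) = (a * b * a) * b := by noncomm_ring
        _ = b * a * (b * b) := by rw [hb]; noncomm_ring
        _ = _ := by rw [hq2, mul_add, mul_smul_comm, mul_one]
    have e3 : (b * a * b) * a = (q - q⁻¹) • (b * a * b) + a * b := by
      calc (b * a * b) * a = b * (a * b * a) := by noncomm_ring
        _ = (b * b) * a * b := by rw [hb]; noncomm_ring
        _ = _ := by rw [hq2]; simp only [add_mul, smul_mul_assoc, one_mul]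
    have l : a * (b * (a * x * a + a) * b + b) =
      a * (b * (a * x * a) * b) + a * (b * a * b) + a * b := by noncomm_ring
    have r : (b * (a * x * a + a) * b + b) * a =
      (b * (a * x * a) * b) * a + (b * a * b) * a + b * a := by noncomm_ring
    rw [l, r, e1, e2, e3]
    abel
  | succ i hij ih =>
    have h1 : Commute (T j) (T i) := H.comm j i hij (by omega)
    exact ((h1.mul_right (ih (by omega))).mul_right h1).add_right h1

theorem HS.jm_comm_lt {q : ℂ} {n : ℕ} {T : ℕ → A} (H : HS q n T) {i j : ℕ} (hij : j < i)
    (hi : i < n) : Commute (jm T i) (jm T j) := by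
  induction j with
  | zero => exact Commute.zero_right _
  | succ j ih =>
    have h1 : Commute (jm T i) (T j) := (H.comm_lo (by omega) hi).symm
    exact ((h1.mul_right (ih (by omega))).mul_right h1).add_right h1

theorem HS.jm_comm {q : ℂ} {n : ℕ} {T : ℕ → A} (H : HS q n T) {i j : ℕ} (hi : i < n)
    (hj : j < n) : Commute (jm T i) (jm T j) := by
  rcases lt_trichotomy i j with h | h | h
  · exact (H.jm_comm_lt h hj).symm
  · subst h; exact Commute.refl _
  · exact H.jm_comm_lt h hi

theorem HS.yT {q : ℂ} {n : ℕ} {T : ℕ → A} (H : HS q n T) {i : ℕ} (hi : i + 1 < n) :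
    jm T (i + 1) * T i = T i * jm T i + 1 + (q - q⁻¹) • jm T (i + 1) := by
  show (T i * jm T i * T i + T i) * T i = T i * jm T i + 1 + (q - q⁻¹) • (T i * jm T i * T i + T i)
  have hq := H.quad i hi
  rw [add_mul, mul_assoc (T i * jm T i), hq, mul_add, mul_smul_comm, mul_one, smul_add]
  abel

theorem HS.Ty {q : ℂ} {n : ℕ} {T : ℕ → A} (H : HS q n T) {i : ℕ} (hi : i + 1 < n) :
    T i * jm T (i + 1) = jm T i * T i + 1 + (q - q⁻¹) • jm T (i + 1) := by
  show T i * (T i * jm T i * T i + T i) = jm T i * T i + 1 + (q - q⁻¹) • (T i * jm T i * T i + T i)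
  have hq := H.quad i hi
  have e : T i * (T i * jm T i * T i + T i) = (T i * T i) * jm T i * T i + T i * T i := by
    noncomm_ring
  rw [e, hq]
  simp only [add_mul, smul_mul_assoc, one_mul, smul_add]
  abel

/-- the intertwiner -/
def ph (q : ℂ) (T : ℕ → A) (i : ℕ) : A :=
  T i * (jm T i - jm T (i + 1)) + (1 + (q - q⁻¹) • jm T (i + 1))

theorem ph_alg {x y T : A} {h : ℂ} (hxy : x * y = y * x) (hyT : y * T = T * x + 1 + h • y)
    (hTy : T * y = x * T + 1 + h • y) (hq : T * T = h • T + 1) :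
    (T * (x - y) + (1 + h • y)) * x = y * (T * (x - y) + (1 + h • y)) ∧
    (T * (x - y) + (1 + h • y)) * y = x * (T * (x - y) + (1 + h • y)) ∧
    (T * (x - y) + (1 + h • y)) * (T * (x - y) + (1 + h • y)) =
      (1 + h • y) * (1 + h • x) - (y - x) * (y - x) := by
  have hxT : x * T = T * y - 1 - h • y := by rw [hTy]; abel
  refine ⟨?_, ?_, ?_⟩
  · rw [mul_add y, ← mul_assoc y, hyT]
    simp only [mul_add, add_mul, mul_sub, sub_mul, one_mul, mul_one, smul_mul_assoc,
      mul_smul_comm, mul_assoc, hxy]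
    abel
  · rw [mul_add x, ← mul_assoc x, hxT]
    simp only [mul_add, add_mul, mul_sub, sub_mul, one_mul, mul_one, smul_mul_assoc,
      mul_smul_comm, mul_assoc, hxy]
    abel
  · have e : (T * (x - y) + (1 + h • y)) * T = - (T * (1 + h • y)) + (y - x) + h • (1 + h • y) := by
      have : (T * (x - y) + (1 + h • y)) * T = T * (x * T) - T * (y * T) + T + h • (y * T) := by
        simp only [mul_add, add_mul, mul_sub, sub_mul, one_mul, mul_one, smul_mul_assoc,
          mul_smul_comm, mul_assoc]
        abel
      rw [this, hxT, hyT]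
      simp only [mul_add, mul_sub, smul_add, mul_smul_comm, ← mul_assoc, hq, mul_one]
      simp only [add_mul, smul_mul_assoc, one_mul]
      abel
    rw [mul_add, ← mul_assoc, e]
    simp only [mul_add, add_mul, mul_sub, sub_mul, one_mul, mul_one, smul_mul_assoc,
      mul_smul_comm, mul_assoc, hxy, smul_add, smul_sub, neg_mul]
    abel

theorem HS.ph_x {q : ℂ} {n : ℕ} {T : ℕ → A} (H : HS q n T) {i : ℕ} (hi : i + 1 < n) :
    ph q T i * jm T i = jm T (i + 1) * ph q T i :=
  (ph_alg (H.jm_comm (by omega) hi).eq (H.yT hi) (H.Ty hi) (H.quad i hi)).1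

theorem HS.ph_y {q : ℂ} {n : ℕ} {T : ℕ → A} (H : HS q n T) {i : ℕ} (hi : i + 1 < n) :
    ph q T i * jm T (i + 1) = jm T i * ph q T i :=
  (ph_alg (H.jm_comm (by omega) hi).eq (H.yT hi) (H.Ty hi) (H.quad i hi)).2.1

theorem HS.ph_sq {q : ℂ} {n : ℕ} {T : ℕ → A} (H : HS q n T) {i : ℕ} (hi : i + 1 < n) :
    ph q T i * ph q T i = (1 + (q - q⁻¹) • jm T (i + 1)) * (1 + (q - q⁻¹) • jm T i)
      - (jm T (i + 1) - jm T i) * (jm T (i + 1) - jm T i) :=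
  (ph_alg (H.jm_comm (by omega) hi).eq (H.yT hi) (H.Ty hi) (H.quad i hi)).2.2

theorem HS.T_comm {q : ℂ} {n : ℕ} {T : ℕ → A} (H : HS q n T) {i j : ℕ} (hi : i + 1 < n)
    (hj : j < n) (h1 : j ≠ i) (h2 : j ≠ i + 1) : Commute (T i) (jm T j) := by
  rcases Nat.lt_or_ge j i with h | h
  · exact H.comm_hi h hi
  · exact H.comm_lo (by omega) hj

theorem HS.ph_comm {q : ℂ} {n : ℕ} {T : ℕ → A} (H : HS q n T) {i j : ℕ} (hi : i + 1 < n)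
    (hj : j < n) (h1 : j ≠ i) (h2 : j ≠ i + 1) : Commute (ph q T i) (jm T j) := by
  have a1 := H.jm_comm (i := i) (j := j) (by omega) hj
  have a2 := H.jm_comm (i := i + 1) (j := j) hi hj
  exact ((H.T_comm hi hj h1 h2).mul_left (a1.sub_left a2)).add_left
    ((Commute.one_left _).add_left (a2.smul_left _))

end

noncomputable section
open Polynomial

variable {A : Type*} [Ring A] [Algebra ℂ A]

theorem eig_disj {f : A} {β : ℂ} {u : A}
    (hu : u ∈ Submodule.span ℂ {w : A | ∃ μ : ℂ, μ ≠ β ∧ f * w = μ • w})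
    (h : f * u = β • u) : u = 0 := by
  have hind := Module.End.eigenspaces_iSupIndep (LinearMap.mulLeft ℂ f) β
  rw [Submodule.disjoint_def] at hind
  apply hind
  · rw [Module.End.mem_eigenspace_iff]
    simpa using h
  · refine (Submodule.span_le.2 ?_) hu
    rintro w ⟨μ, hμ, e⟩
    refine Submodule.mem_iSup_of_mem μ (Submodule.mem_iSup_of_mem hμ ?_)
    rw [Module.End.mem_eigenspace_iff]
    simpa using e

theorem eig_ss {f : A} {S : Set ℂ} {v : A} {β : ℂ}
    (hv : v ∈ Submodule.span ℂ {w : A | ∃ μ ∈ S, f * w = μ • w})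
    (h : f * (f * v - β • v) = β • (f * v - β • v)) : f * v - β • v = 0 := by
  refine eig_disj (f := f) (β := β) ?_ h
  clear h
  induction hv using Submodule.span_induction with
  | mem w hw =>
    obtain ⟨μ, -, e⟩ := hw
    by_cases hμ : μ = β
    · rw [e, hμ, sub_self]; exact Submodule.zero_mem _
    · rw [e, ← sub_smul]
      exact Submodule.smul_mem _ _ (Submodule.subset_span ⟨μ, hμ, e⟩)
  | zero => simp
  | add x y _ _ hx hy =>
    have : f * (x + y) - β • (x + y) = (f * x - β • x) + (f * y - β • y) := by
      rw [mul_add, smul_add]; abel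
    rw [this]; exact Submodule.add_mem _ hx hy
  | smul t x _ hx =>
    have : f * (t • x) - β • (t • x) = t • (f * x - β • x) := by
      rw [mul_smul_comm, smul_sub, smul_comm]
    rw [this]; exact Submodule.smul_mem _ _ hx

theorem eig_wt {f : A} {S : Set ℂ} {v : A} {β : ℂ}
    (hv : v ∈ Submodule.span ℂ {w : A | ∃ μ ∈ S, f * w = μ • w})
    (h : f * v = β • v) (hv0 : v ≠ 0) : β ∈ S := by
  by_contra hβ
  apply hv0
  refine eig_disj (f := f) (β := β) (Submodule.span_mono ?_ hv) h
  rintro w ⟨μ, hμ, e⟩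
  exact ⟨μ, fun h => hβ (h ▸ hμ), e⟩

def PC (S : Set ℂ) : Submonoid ℂ[X] := Submonoid.closure {p | ∃ β ∈ S, p = X - C β}

theorem PC_mem {S : Set ℂ} {β : ℂ} (h : β ∈ S) : X - C β ∈ PC S :=
  Submonoid.subset_closure ⟨β, h, rfl⟩

theorem PC_kill {f : A} {S : Set ℂ} {v : A}
    (hv : v ∈ Submodule.span ℂ {w : A | ∃ μ ∈ S, f * w = μ • w}) :
    ∃ p ∈ PC S, aeval f p * v = 0 := by
  induction hv using Submodule.span_induction with
  | mem w hw =>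
    obtain ⟨μ, hμ, e⟩ := hw
    refine ⟨_, PC_mem hμ, ?_⟩
    simp [sub_mul, e, Algebra.algebraMap_eq_smul_one]
  | zero => exact ⟨1, Submonoid.one_mem _, by simp⟩
  | add x y _ _ hx hy =>
    obtain ⟨p, hp, ep⟩ := hx
    obtain ⟨r, hr, er⟩ := hy
    refine ⟨p * r, Submonoid.mul_mem _ hp hr, ?_⟩
    rw [mul_add, map_mul, mul_assoc _ _ y, er, mul_zero, ← map_mul, mul_comm p r, map_mul,
      mul_assoc, ep, mul_zero, add_zero]
  | smul t x _ hx =>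
    obtain ⟨p, hp, ep⟩ := hx
    exact ⟨p, hp, by rw [mul_smul_comm, ep, smul_zero]⟩

theorem aeval_semi {f x y : A} (h : f * y = x * f) (p : ℂ[X]) :
    f * aeval y p = aeval x p * f := by
  induction p using Polynomial.induction_on' with
  | add p r hp hr => rw [map_add, map_add, mul_add, add_mul, hp, hr]
  | monomial n a =>
    have : ∀ n : ℕ, f * y ^ n = x ^ n * f := by
      intro n
      induction n with
      | zero => simp
      | succ n ih => rw [pow_succ, ← mul_assoc, ih, mul_assoc, h, ← mul_assoc, ← pow_succ]
    rw [aeval_monomial, aeval_monomial, ← mul_assoc, ← Algebra.commutes, mul_assoc, this,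
      mul_assoc]

theorem PC_decomp {y : A} {S : Set ℂ} {E : Submodule ℂ A} (hE : ∀ v ∈ E, y * v ∈ E)
    (hss : ∀ β ∈ S, ∀ u ∈ E, y * (y * u - β • u) = β • (y * u - β • u) → y * u - β • u = 0)
    {p : ℂ[X]} (hp : p ∈ PC S) : ∀ v ∈ E, aeval y p * v = 0 →
      v ∈ Submodule.span ℂ {w : A | w ∈ E ∧ ∃ β ∈ S, y * w = β • w} := by
  induction hp using Submonoid.closure_induction_left with
  | one => intro v _ h; simp at h; simp [h]
  | mul_left x hx p hp ih =>
    obtain ⟨β, hβ, rfl⟩ := hx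
    intro v hv h
    have hu := ih (y * v - β • v) (E.sub_mem (hE v hv) (E.smul_mem _ hv)) (by
      rw [mul_comm, map_mul, mul_assoc] at h
      simpa [sub_mul, Algebra.algebraMap_eq_smul_one] using h)
    have key : ∀ u ∈ Submodule.span ℂ {w : A | w ∈ E ∧ ∃ β ∈ S, y * w = β • w},
        ∃ v₀ ∈ Submodule.span ℂ {w : A | w ∈ E ∧ ∃ β ∈ S, y * w = β • w}, ∃ u₀ ∈ E,
          y * u₀ = β • u₀ ∧ u = y * v₀ - β • v₀ + u₀ := by
      intro u hu
      induction hu using Submodule.span_induction with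
      | mem w hw =>
        obtain ⟨hwE, μ, hμ, e⟩ := hw
        by_cases hμβ : μ = β
        · exact ⟨0, Submodule.zero_mem _, w, hwE, by rw [e, hμβ], by simp⟩
        · refine ⟨(μ - β)⁻¹ • w, Submodule.smul_mem _ _ (Submodule.subset_span ⟨hwE, μ, hμ, e⟩),
            0, E.zero_mem, by simp, ?_⟩
          rw [mul_smul_comm, e, smul_comm β, ← smul_sub, ← sub_smul, smul_smul,
            inv_mul_cancel₀ (sub_ne_zero.2 hμβ), one_smul, add_zero]
      | zero => exact ⟨0, Submodule.zero_mem _, 0, E.zero_mem, by simp, by simp⟩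
      | add a b _ _ ha hb =>
        obtain ⟨a1, h1, a2, h2, h3, h4⟩ := ha
        obtain ⟨b1, k1, b2, k2, k3, k4⟩ := hb
        refine ⟨a1 + b1, Submodule.add_mem _ h1 k1, a2 + b2, E.add_mem h2 k2, ?_, ?_⟩
        · rw [mul_add, h3, k3, smul_add]
        · rw [h4, k4, mul_add, smul_add]; abel
      | smul t a _ ha =>
        obtain ⟨a1, h1, a2, h2, h3, h4⟩ := ha
        refine ⟨t • a1, Submodule.smul_mem _ _ h1, t • a2, E.smul_mem _ h2, ?_, ?_⟩
        · rw [mul_smul_comm, h3, smul_comm]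
        · rw [h4, mul_smul_comm, smul_add, smul_sub, smul_comm β t]
    obtain ⟨v₀, hv₀, u₀, hu₀, e1, e2⟩ := key _ hu
    have hv₀E : v₀ ∈ E := by
      have : Submodule.span ℂ {w : A | w ∈ E ∧ ∃ β ∈ S, y * w = β • w} ≤ E :=
        Submodule.span_le.2 fun w hw => hw.1
      exact this hv₀
    have e3 : y * (v - v₀) - β • (v - v₀) = u₀ := by
      have : y * (v - v₀) - β • (v - v₀) = (y * v - β • v) - (y * v₀ - β • v₀) := by
        rw [mul_sub, smul_sub]; abel
      rw [this, e2]; abel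
    have hd : v - v₀ ∈ E := E.sub_mem hv hv₀E
    have e4 := hss β hβ (v - v₀) hd (by rw [e3, e1])
    have : v - v₀ ∈ Submodule.span ℂ {w : A | w ∈ E ∧ ∃ β ∈ S, y * w = β • w} :=
      Submodule.subset_span ⟨hd, β, hβ, sub_eq_zero.1 e4⟩
    have := Submodule.add_mem _ this hv₀
    rwa [sub_add_cancel] at this

end

noncomputable section
open Polynomial

variable {A : Type*} [Ring A] [Algebra ℂ A]

/-- weight spaces -/
def EV (q : ℂ) (T : ℕ → A) (k : ℕ) (c : ℕ → ℤ) : Submodule ℂ A where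
  carrier := {v | ∀ j < k, jm T j * v = zc q (c j) • v}
  add_mem' := by
    intro a b ha hb j hj
    rw [mul_add, ha j hj, hb j hj, smul_add]
  zero_mem' := by intro j _; simp
  smul_mem' := by
    intro t a ha j hj
    rw [mul_smul_comm, ha j hj, smul_comm]

theorem mem_EV {q : ℂ} {T : ℕ → A} {k : ℕ} {c : ℕ → ℤ} {v : A} :
    v ∈ EV q T k c ↔ ∀ j < k, jm T j * v = zc q (c j) • v := Iff.rfl

theorem EV_mono {q : ℂ} {T : ℕ → A} {k l : ℕ} {c : ℕ → ℤ} {v : A} (h : v ∈ EV q T k c)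
    (hl : l ≤ k) : v ∈ EV q T l c := fun j hj => h j (by omega)

theorem EV_congr {q : ℂ} {T : ℕ → A} {k : ℕ} {c d : ℕ → ℤ} {v : A} (h : v ∈ EV q T k c)
    (e : ∀ j < k, c j = d j) : v ∈ EV q T k d := fun j hj => by rw [← e j hj]; exact h j hj

theorem EV_upd {q : ℂ} {T : ℕ → A} {k : ℕ} {c : ℕ → ℤ} {v : A} {b : ℤ} (h : v ∈ EV q T k c)
    (e : jm T k * v = zc q b • v) : v ∈ EV q T (k + 1) (Function.update c k b) := by
  intro j hj
  rcases Nat.lt_or_ge j k with h1 | h1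
  · rw [upd_lt h1]; exact h j h1
  · obtain rfl : j = k := by omega
    rw [upd_eq]; exact e

def SS (q : ℂ) (T : ℕ → A) (k : ℕ) : Prop :=
  ∀ c, GS k c → ∀ v ∈ EV q T k c, v ∈ Submodule.span ℂ
    {w : A | ∃ b, GS (k + 1) (Function.update c k b) ∧ w ∈ EV q T (k + 1) (Function.update c k b)}

theorem SS.span {q : ℂ} {T : ℕ → A} {k : ℕ} (h : SS q T k) {c : ℕ → ℤ} (hc : GS k c) {v : A}
    (hv : v ∈ EV q T k c) : v ∈ Submodule.span ℂ {w : A |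
      ∃ μ ∈ {μ : ℂ | ∃ b, GS (k + 1) (Function.update c k b) ∧ μ = zc q b},
        jm T k * w = μ • w} := by
  refine Submodule.span_mono ?_ (h c hc v hv)
  rintro w ⟨b, hb, hw⟩
  refine ⟨zc q b, ⟨b, hb, rfl⟩, ?_⟩
  have := hw k (by omega)
  rwa [upd_eq] at this

theorem SS.ss {q : ℂ} {T : ℕ → A} {k : ℕ} (h : SS q T k) {c : ℕ → ℤ} (hc : GS k c) {v : A}
    (hv : v ∈ EV q T k c) {β : ℂ}
    (e : jm T k * (jm T k * v - β • v) = β • (jm T k * v - β • v)) :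
    jm T k * v - β • v = 0 := eig_ss (h.span hc hv) e

theorem SS.wt {q : ℂ} {T : ℕ → A} {k : ℕ} (h : SS q T k) {c : ℕ → ℤ} (hc : GS k c) {v : A}
    (hv : v ∈ EV q T k c) {β : ℂ} (e : jm T k * v = β • v) (h0 : v ≠ 0) :
    ∃ b, GS (k + 1) (Function.update c k b) ∧ β = zc q b := eig_wt (h.span hc hv) e h0

section
variable {q : ℂ} {n : ℕ} {T : ℕ → A} (G : GQ q n) (H : HS q n T)
include G H

theorem V1 {k : ℕ} (hk : k + 1 < n) (hS : SS q T k) {c : ℕ → ℤ} (hc : GS k c) {v : A}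
    (hv : v ∈ EV q T (k + 2) c) (e : c k = c (k + 1)) : v = 0 := by
  have hx := hv k (by omega)
  have hy := hv (k + 1) (by omega)
  rw [← e] at hy
  have hw : T k * v ∈ EV q T k c := by
    intro j hj
    rw [← mul_assoc, ← (H.T_comm hk (by omega : j < n) (by omega) (by omega)).eq, mul_assoc,
      hv j (by omega), mul_smul_comm]
  have h1 : jm T k * (T k * v) - zc q (c k) • (T k * v) = -(q ^ (2 * c k)) • v := by
    have := congrArg (· * v) (H.Ty hk)
    simp only [add_mul, one_mul, mul_assoc, hy, smul_mul_assoc, mul_smul_comm] at this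
    rw [this, ← zc_hq G.ne]
    module
  have h2 := hS.ss hc hw (β := zc q (c k)) (by rw [h1, mul_smul_comm, hx, smul_comm])
  rw [h1] at h2
  rcases smul_eq_zero.1 h2 with h | h
  · exact absurd (neg_eq_zero.1 h) (zpow_ne_zero _ G.ne)
  · exact h

theorem ph_EV {m i : ℕ} (hm : m ≤ n) (hi : i + 1 < m) {c : ℕ → ℤ} {v : A}
    (hv : v ∈ EV q T m c) : ph q T i * v ∈ EV q T m (sw i c) := by
  intro j hj
  by_cases h1 : j = i
  · subst h1
    rw [sw_left, ← mul_assoc, ← H.ph_y (by omega), mul_assoc, hv _ hi, mul_smul_comm]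
  by_cases h2 : j = i + 1
  · subst h2
    rw [sw_right, ← mul_assoc, ← H.ph_x (by omega), mul_assoc, hv _ (by omega), mul_smul_comm]
  · rw [sw_ne _ h1 h2, ← mul_assoc, ← (H.ph_comm (by omega) (by omega) h1 h2).eq, mul_assoc,
      hv _ hj, mul_smul_comm]

theorem ph_EV_lt {i : ℕ} (hi : i + 1 < n) {c : ℕ → ℤ} {v : A}
    (hv : v ∈ EV q T i c) : ph q T i * v ∈ EV q T i c := by
  intro j hj
  rw [← mul_assoc, ← (H.ph_comm hi (by omega : j < n) (by omega) (by omega)).eq, mul_assoc,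
      hv _ hj, mul_smul_comm]

omit H in
theorem ph_scalar (a : ℤ) (y : ℂ) : (1 + (q - q⁻¹) * y) * q ^ (2 * a) - (y - zc q a) ^ 2 =
    -((y - zc q (a + 1)) * (y - zc q (a - 1))) := by
  have hq := G.ne
  have h1 := zc_sub hq (a + 1) a
  have h2 := zc_sub hq (a - 1) a
  have h3 := zc_hq hq a
  have h4 := zc_neg hq 1
  have e1 : a + 1 - a = 1 := by ring
  have e2 : a - 1 - a = -1 := by ring
  rw [e1, zc_one hq] at h1
  rw [e2] at h2
  rw [zc_one hq] at h4
  have h5 : zc q (-1) = -q⁻¹ := by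
    have : q ^ (2 * (1 : ℤ)) = q * q := by norm_cast; ring
    rw [this] at h4
    field_simp
    have : q * (zc q (-1) * q + 1) = 0 := by linear_combination h4
    rcases mul_eq_zero.1 this with h | h
    · exact absurd h hq
    · linear_combination h
  rw [h5] at h2
  have h6 : zc q (a + 1) = zc q a + q ^ (2 * a) * q := by linear_combination h1
  have h7 : zc q (a - 1) = zc q a + q ^ (2 * a) * -q⁻¹ := by linear_combination h2
  rw [h6, h7]
  have h8 : q * q⁻¹ = 1 := mul_inv_cancel₀ hq
  linear_combination (q ^ (2 * a)) * h3 - q ^ (2 * a) * q ^ (2 * a) * h8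

/-- square of the intertwiner, as polynomial in the second variable -/
theorem ph_ph {i : ℕ} (hi : i + 1 < n) {a : ℤ} {v : A} (hv : jm T i * v = zc q a • v) :
    ph q T i * (ph q T i * v) =
      -(aeval (jm T (i + 1)) ((X - C (zc q (a + 1))) * (X - C (zc q (a - 1)))) * v) := by
  rw [← mul_assoc, H.ph_sq hi]
  have hc := (H.jm_comm (i := i) (j := i + 1) (by omega) hi).eq
  have s1 := ph_scalar G a 0
  have s2 := ph_scalar G a 1
  have s3 := ph_scalar G a (-1)
  have hsum : zc q (a + 1) + zc q (a - 1) = (q - q⁻¹) * q ^ (2 * a) + 2 * zc q a := by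
    linear_combination -(s2 - s3) / 2
  have hprod : zc q (a + 1) * zc q (a - 1) = zc q a ^ 2 - q ^ (2 * a) := by
    linear_combination s1
  have hz := zc_hq G.ne a
  have l1 : jm T i * (jm T (i + 1) * v) = zc q a • (jm T (i + 1) * v) := by
    rw [← mul_assoc, hc, mul_assoc, hv, mul_smul_comm]
  have e1 : ((1 + (q - q⁻¹) • jm T (i + 1)) * (1 + (q - q⁻¹) • jm T i) -
      (jm T (i + 1) - jm T i) * (jm T (i + 1) - jm T i)) * v =
      q ^ (2 * a) • v + (q ^ (2 * a) * (q - q⁻¹) + 2 * zc q a) • (jm T (i + 1) * v)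
        - jm T (i + 1) * (jm T (i + 1) * v) - (zc q a ^ 2) • v := by
    rw [← hz]
    simp only [sub_mul, add_mul, mul_sub, mul_add, one_mul, mul_one, mul_assoc, smul_mul_assoc,
      mul_smul_comm, hv, l1]
    module
  have e2 : aeval (jm T (i + 1)) ((X - C (zc q (a + 1))) * (X - C (zc q (a - 1)))) * v =
      jm T (i + 1) * (jm T (i + 1) * v) - (zc q (a + 1) + zc q (a - 1)) • (jm T (i + 1) * v)
        + (zc q (a + 1) * zc q (a - 1)) • v := by
    simp only [map_mul, map_sub, aeval_X, aeval_C, Algebra.algebraMap_eq_smul_one]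
    simp only [sub_mul, mul_sub, mul_assoc, smul_mul_assoc, mul_smul_comm, one_mul]
    module
  rw [e1, e2, hsum, hprod]
  module

theorem ph_ph_ev {i : ℕ} (hi : i + 1 < n) {a b : ℤ} {v : A} (hv : jm T i * v = zc q a • v)
    (hv2 : jm T (i + 1) * v = zc q b • v) :
    ph q T i * (ph q T i * v) = -((zc q b - zc q (a + 1)) * (zc q b - zc q (a - 1))) • v := by
  rw [ph_ph G H hi hv]
  simp only [map_mul, map_sub, aeval_X, aeval_C, Algebra.algebraMap_eq_smul_one]
  simp only [sub_mul, mul_sub, mul_assoc, smul_mul_assoc, mul_smul_comm, one_mul, hv2]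
  module

theorem ph_inj {i : ℕ} (hi : i + 1 < n) {a b : ℤ} {v : A} (hv : jm T i * v = zc q a • v)
    (hv2 : jm T (i + 1) * v = zc q b • v) (h2 : 2 ≤ |a - b|) (hn : |a - b| + 1 ≤ n)
    (h0 : ph q T i * v = 0) : v = 0 := by
  have e := ph_ph_ev G H hi hv hv2
  rw [h0, mul_zero] at e
  rcases smul_eq_zero.1 e.symm with h | h
  · exfalso
    rcases abs_cases (a - b) with ⟨h3, h4⟩ | ⟨h3, h4⟩
    all_goals
      rcases mul_eq_zero.1 (neg_eq_zero.1 h) with h | h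
      · have := G.inj (a := b) (b := a + 1) (by rw [abs_le]; omega) (sub_eq_zero.1 h)
        omega
      · have := G.inj (a := b) (b := a - 1) (by rw [abs_le]; omega) (sub_eq_zero.1 h)
        omega
  · exact h

omit H in
theorem no_two {k : ℕ} (hk : k + 2 ≤ n) {c : ℕ → ℤ} {a b ε : ℤ} (hε : ε = 1 ∨ ε = -1)
    (ha : GS (k + 1) (Function.update c k a)) (hb : GS (k + 1) (Function.update c k b))
    (e : zc q (a + ε) = zc q b) : False := by
  have h1 := ha.next_bound hb
  have h2 : a + ε = b := G.inj (by rw [abs_le] at h1 ⊢; omega) e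
  subst h2
  rcases hε with rfl | rfl
  · exact ha.adj hb
  · exact GS.adj (a := a + -1) hb (by simpa using ha)

theorem braid_zero {k : ℕ} (hk : k + 2 < n) (hS : SS q T k) {c : ℕ → ℤ} (hc : GS (k + 2) c)
    {ε : ℤ} (hε : ε = 1 ∨ ε = -1) (h1 : c k = c (k + 1) + ε) (h2 : c (k + 2) = c (k + 1) + ε)
    {v : A} (hv : v ∈ EV q T (k + 3) c) : v = 0 := by
  by_contra hv0
  have hck : GS k c := hc.mono (by omega)
  have hck1 : GS (k + 1) c := hc.mono (by omega)
  have p1 : ph q T k * v = 0 := by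
    by_contra h0
    have hm := ph_EV G H (m := k + 3) (i := k) (by omega) (by omega) hv
    have hm2 := ph_EV_lt G H (i := k) (by omega) (EV_mono hv (by omega))
    have hm1 := hm k (by omega)
    rw [sw_left] at hm1
    obtain ⟨b, hb, e⟩ := hS.wt hck hm2 hm1 h0
    refine no_two G (a := c k) (b := b) (ε := -ε) (k := k) (by omega) (by omega) ?_ hb ?_
    · simpa using hck1
    · rw [← e, h1]; congr 1; ring
  have p2 : ph q T (k + 1) * v = 0 := by
    have hm := ph_EV G H (m := k + 3) (i := k + 1) (by omega) (by omega) hv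
    refine V1 G H (by omega) hS (c := sw (k + 1) c) ?_ (EV_mono hm (by omega)) ?_
    · exact hck.congr fun j hj => (sw_ne c (by omega) (by omega)).symm
    · rw [sw_left, sw_ne c (by omega) (by omega), h1, h2]
  have x0 := hv k (by omega)
  have x1 := hv (k + 1) (by omega)
  have x2 := hv (k + 2) (by omega)
  rw [h1] at x0
  rw [h2] at x2
  set a := c (k + 1) with ha
  have hne : zc q (a + ε) - zc q a ≠ 0 := by
    rw [zc_sub G.ne]
    refine mul_ne_zero (zpow_ne_zero _ G.ne) (G.nz _ (by omega) ?_)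
    rw [abs_le]; omega
  have t1 : T k * v = (-(q ^ (2 * a)) / (zc q (a + ε) - zc q a)) • v := by
    unfold ph at p1
    simp only [add_mul, mul_assoc, sub_mul, x0, x1, one_mul, smul_mul_assoc] at p1
    rw [← sub_smul, mul_smul_comm] at p1
    rw [div_eq_inv_mul, mul_smul, eq_inv_smul_iff₀ hne, ← zc_hq G.ne]
    rw [← sub_eq_zero, ← p1]; module
  have t2 : T (k + 1) * v = ((q ^ (2 * (a + ε))) / (zc q (a + ε) - zc q a)) • v := by
    unfold ph at p2
    simp only [add_mul, mul_assoc, sub_mul, x2, x1, one_mul, smul_mul_assoc] at p2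
    rw [← sub_smul, mul_smul_comm] at p2
    rw [div_eq_inv_mul, mul_smul, eq_inv_smul_iff₀ hne, ← zc_hq G.ne]
    rw [← sub_eq_zero, ← neg_eq_zero, ← p2]; module
  have hb := congrArg (· * v) (H.braid k hk)
  simp only [mul_assoc, t1, t2, mul_smul_comm] at hb
  rw [← sub_eq_zero] at hb
  simp only [smul_smul, ← sub_smul] at hb
  rcases smul_eq_zero.1 hb with h | h
  · have hA : q ^ (2 * a) ≠ 0 := zpow_ne_zero _ G.ne
    have hB : q ^ (2 * (a + ε)) ≠ 0 := zpow_ne_zero _ G.ne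
    have hAB : q ^ (2 * (a + ε)) = q ^ (2 * a) * q ^ (2 * ε) := by
      rw [← zpow_add₀ G.ne]; congr 1; ring
    have h3 := zc_sub G.ne (2 * ε) ε
    have h4 : (2 * ε - ε) = ε := by ring
    rw [h4] at h3
    have h5 : zc q (2 * ε) ≠ 0 := G.nz _ (by omega) (by rw [abs_le]; omega)
    apply h5
    generalize zc q (a + ε) - zc q a = d at *
    have h6 : q ^ (2 * a) + q ^ (2 * (a + ε)) = 0 := by
      field_simp at h
      have : q ^ (2 * a) * q ^ (2 * (a + ε)) * (q ^ (2 * a) + q ^ (2 * (a + ε))) = 0 := by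
        linear_combination h
      exact (mul_eq_zero.1 this).resolve_left (mul_ne_zero hA hB)
    rw [hAB] at h6
    have h7 : 1 + q ^ (2 * ε) = 0 := by
      have : q ^ (2 * a) * (1 + q ^ (2 * ε)) = 0 := by linear_combination h6
      exact (mul_eq_zero.1 this).resolve_left hA
    linear_combination h3 + zc q ε * h7
  · exact hv0 h

theorem move_zero (d : ℕ) : ∀ (p k : ℕ), k = p + 1 + d → k + 1 < n → (∀ j ≤ k, SS q T j) →
    ∀ {c : ℕ → ℤ}, GS (k + 1) c → ∀ {ε : ℤ}, (ε = 1 ∨ ε = -1) → c p = c k + ε →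
    (∀ r, p < r → r < k → c r ≠ c k ∧ c r ≠ c k + ε ∧ c r ≠ c k + 2 * ε) →
    c (k + 1) = c k + ε → ∀ {v : A}, v ∈ EV q T (k + 2) c → v = 0 := by
  induction d with
  | zero =>
    intro p k hk hkn hS c hc ε hε hp _ hl v hv
    obtain rfl : k = p + 1 := by omega
    exact braid_zero G H (by omega) (hS p (by omega)) hc hε hp hl hv
  | succ d ih =>
    intro p k hk hkn hS c hc ε hε hp hr hl v hv
    have h1 := hr (p + 1) (by omega) (by omega)
    have h2 : 2 ≤ |c p - c (p + 1)| := by rw [le_abs]; omega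
    have h3 := hc.bound (m := p) (p := p + 1) (by omega) (by omega)
    have hck : sw p c k = c k := sw_ne c (by omega) (by omega)
    have hck1 : sw p c (k + 1) = c (k + 1) := sw_ne c (by omega) (by omega)
    refine ph_inj G H (i := p) (by omega) (hv p (by omega)) (hv (p + 1) (by omega)) h2
      (by push_cast at h3; omega) ?_
    refine ih (p + 1) k (by omega) hkn hS (hc.swap (by omega) h2) hε ?_ ?_ ?_
      (ph_EV G H (by omega) (by omega) hv)
    · rw [sw_right, hck, hp]
    · intro r h5 h6
      rw [hck, sw_ne c (by omega) (by omega)]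
      exact hr r (by omega) h6
    · rw [hck, hck1, hl]

theorem next_good {k : ℕ} (hk : k + 1 < n) (hS : ∀ j ≤ k, SS q T j) {c : ℕ → ℤ}
    (hc : GS (k + 1) c) {b : ℤ}
    (hb : b = c k + 1 ∨ b = c k - 1 ∨ GS (k + 1) (Function.update c k b)) {w : A}
    (hw : w ∈ EV q T (k + 2) (Function.update c (k + 1) b)) (hw0 : w ≠ 0) :
    GS (k + 2) (Function.update c (k + 1) b) := by
  have hck : GS k c := hc.mono (by omega)
  have hu : ∀ j < k + 1, c j = Function.update c (k + 1) b j := fun j hj => (upd_lt hj).symm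
  by_cases hba : b = c k
  · exfalso
    apply hw0
    refine V1 G H hk (hS k le_rfl) (c := Function.update c (k + 1) b)
      (hck.congr fun j hj => hu j (by omega)) hw ?_
    rw [upd_eq, ← hu k (by omega), hba]
  have adj : ∀ ε : ℤ, (ε = 1 ∨ ε = -1) → b = c k + ε →
      GS (k + 2) (Function.update c (k + 1) b) := by
    intro ε hε hbe
    by_contra hcon
    rw [hbe] at hcon
    obtain ⟨p, hp, h1, h2⟩ := hc.extend_adj hε hcon
    apply hw0
    refine move_zero G H (k - p - 1) p k (by omega) hk hS
      (c := Function.update c (k + 1) b) (hc.congr hu) hε ?_ ?_ ?_ hw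
    · rw [← hu p (by omega), ← hu k (by omega), h1]
    · intro r h3 h4
      rw [← hu r (by omega), ← hu k (by omega)]
      exact h2 r h3 h4
    · rw [upd_eq, ← hu k (by omega), hbe]
  rcases hb with h | h | h
  · exact adj 1 (by simp) h
  · exact adj (-1) (by simp) h
  · refine hc.extend h ?_ hba
    by_contra hk0
    obtain rfl : k = 0 := by omega
    have h1 := (hc 0 (by omega)).1 rfl
    have h2 := (h 0 (by omega)).1 rfl
    rw [upd_eq] at h2
    omega

theorem SS_step {k : ℕ} (hk : k + 1 < n) (hS : ∀ j ≤ k, SS q T j) : SS q T (k + 1) := by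
  intro c hc v hv
  have hck : GS k c := hc.mono (by omega)
  have hSk := hS k le_rfl
  set S : Set ℂ := {β | ∃ b : ℤ, (b = c k + 1 ∨ b = c k - 1 ∨
    GS (k + 1) (Function.update c k b)) ∧ β = zc q b} with hSdef
  have hEy : ∀ u ∈ EV q T (k + 1) c, jm T (k + 1) * u ∈ EV q T (k + 1) c := by
    intro u hu j hj
    rw [← mul_assoc, (H.jm_comm (i := j) (j := k + 1) (by omega) hk).eq, mul_assoc, hu j hj,
      mul_smul_comm]
  -- annihilating polynomial
  obtain ⟨p, hp, hpv⟩ : ∃ p ∈ PC S, aeval (jm T (k + 1)) p * v = 0 := by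
    have h1 := ph_EV_lt G H (i := k) hk (EV_mono hv (by omega))
    have h2 := hSk.span hck h1
    obtain ⟨p, hp, e⟩ := PC_kill h2
    rw [← mul_assoc, ← aeval_semi (H.ph_y hk), mul_assoc] at e
    have hcm : jm T k * aeval (jm T (k + 1)) p = aeval (jm T (k + 1)) p * jm T k :=
      aeval_semi (H.jm_comm (by omega) hk).eq p
    have e2 := ph_ph G H hk (a := c k) (v := aeval (jm T (k + 1)) p * v) (by
      rw [← mul_assoc, hcm, mul_assoc, hv k (by omega), mul_smul_comm])
    rw [e, mul_zero, ← mul_assoc, ← map_mul] at e2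
    refine ⟨_, ?_, neg_eq_zero.1 e2.symm⟩
    refine Submonoid.mul_mem _ (Submonoid.mul_mem _ (PC_mem ⟨_, Or.inl rfl, rfl⟩)
      (PC_mem ⟨_, Or.inr (Or.inl rfl), rfl⟩)) ?_
    refine Submonoid.closure_mono ?_ hp
    rintro r ⟨β, ⟨b, hb, rfl⟩, rfl⟩
    exact ⟨_, ⟨b, Or.inr (Or.inr hb), rfl⟩, rfl⟩
  have hdec := PC_decomp (E := EV q T (k + 1) c) (S := S) hEy ?_ hp v hv hpv
  · rw [← Submodule.span_sdiff_singleton_zero] at hdec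
    refine Submodule.span_mono ?_ hdec
    rintro w ⟨⟨hwE, β, ⟨b, hb, rfl⟩, e⟩, hw0⟩
    have hw := EV_upd hwE e
    exact ⟨b, next_good G H hk hS hc hb hw hw0, hw⟩
  · rintro β ⟨b, hb, rfl⟩ u hu e
    by_contra h0
    set w := jm T (k + 1) * u - zc q b • u with hwdef
    have hwE : w ∈ EV q T (k + 1) c :=
      (EV q T (k + 1) c).sub_mem (hEy u hu) ((EV q T (k + 1) c).smul_mem _ hu)
    have hw := EV_upd hwE e
    have hg := next_good G H hk hS hc hb hw h0
    have hx : jm T k * w = zc q (c k) • w := hwE k (by omega)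
    have hxu : jm T k * u = zc q (c k) • u := hu k (by omega)
    have hba : b ≠ c k := by
      intro hba
      apply h0
      refine V1 G H hk hSk (c := Function.update c (k + 1) b)
        (hck.congr fun j hj => (upd_lt (by omega)).symm) hw ?_
      rw [upd_eq, upd_lt (by omega), hba]
    have e1 : jm T k * (ph q T k * u) - zc q b • (ph q T k * u) = ph q T k * w := by
      rw [hwdef, mul_sub, ← mul_assoc, ← H.ph_y hk, mul_assoc, mul_smul_comm]
    have e2 : jm T k * (ph q T k * w) = zc q b • (ph q T k * w) := by
      rw [← mul_assoc, ← H.ph_y hk, mul_assoc, e, mul_smul_comm]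
    have hphu := ph_EV_lt G H (i := k) hk (EV_mono hu (by omega))
    have e3 := hSk.ss hck hphu (β := zc q b) (by rw [e1, e2])
    rw [e1] at e3
    have hbd := hg.bound (m := k) (p := k + 1) (by omega) (by omega)
    rw [upd_eq, upd_lt (by omega)] at hbd
    have adj : ∀ ε : ℤ, (ε = 1 ∨ ε = -1) → b = c k + ε → False := by
      intro ε hε hbe
      have hph0 : ph q T k * u = 0 := by
        by_contra hne
        obtain ⟨b', hb', e'⟩ := hSk.wt hck hphu (sub_eq_zero.1 (e1.trans e3)) hne
        refine no_two G (a := c k) (b := b') (ε := ε) (k := k) (by omega) hε ?_ hb' ?_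
        · simpa using hc
        · rw [← e', hbe]
      have e4 := ph_ph G H hk hxu
      rw [hph0, mul_zero] at e4
      have e5 : aeval (jm T (k + 1)) ((X - C (zc q (c k + 1))) * (X - C (zc q (c k - 1)))) * u =
          (zc q b - zc q (c k - ε)) • w := by
        have : (X - C (zc q (c k + 1))) * (X - C (zc q (c k - 1))) =
            (X - C (zc q (c k - ε))) * (X - C (zc q b)) := by
          rcases hε with rfl | rfl
          · rw [hbe, mul_comm]
          · rw [hbe, sub_neg_eq_add]; rfl
        rw [this, map_mul, mul_assoc]
        have : aeval (jm T (k + 1)) (X - C (zc q b)) * u = w := by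
          simp [hwdef, sub_mul, Algebra.algebraMap_eq_smul_one]
        rw [this]
        simp [sub_mul, Algebra.algebraMap_eq_smul_one, e, sub_smul]
      rw [e5] at e4
      rcases smul_eq_zero.1 (neg_eq_zero.1 e4.symm) with h | h
      · have := G.inj (a := b) (b := c k - ε) (by rw [abs_le]; omega) (sub_eq_zero.1 h)
        omega
      · exact h0 h
    have n1 : b ≠ c k + 1 := adj 1 (by simp)
    have n2 : b ≠ c k - 1 := fun h => adj (-1) (by simp) (by omega)
    apply h0
    have hwy := e
    refine ph_inj G H hk hx hwy ?_ ?_ e3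
    · rw [le_abs]; omega
    · push_cast at hbd; omega

theorem SS_all : ∀ k, k < n → SS q T k := by
  intro k
  induction k using Nat.strong_induction_on with
  | _ k ih =>
    intro hk
    rcases Nat.eq_zero_or_pos k with h0 | h0
    · subst h0
      intro c _ v _
      refine Submodule.subset_span ⟨0, ?_, ?_⟩
      · intro m hm
        obtain rfl : m = 0 := by omega
        exact ⟨fun _ => upd_eq, by omega, by omega⟩
      · intro j hj
        obtain rfl : j = 0 := by omega
        rw [upd_eq, zc_zero]
        simp [jm]
    · obtain ⟨k, rfl⟩ : ∃ l, k = l + 1 := ⟨k - 1, by omega⟩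
      exact SS_step G H hk fun j hj => ih j (by omega) (by omega)

end
end

noncomputable section

variable {A : Type*} [Ring A] [Algebra ℂ A]

def Good (n : ℕ) (c : ℕ → ℤ) : Prop := GS n c ∧ ∀ j, n ≤ j → c j = 0

/-- the good weight spaces -/
def WS (q : ℂ) (n : ℕ) (T : ℕ → A) (c : ℕ → ℤ) : Submodule ℂ A where
  carrier := {v | v ∈ EV q T n c ∧ (v ≠ 0 → Good n c)}
  add_mem' := by
    rintro a b ⟨ha, ha'⟩ ⟨hb, hb'⟩
    refine ⟨Submodule.add_mem _ ha hb, fun h => ?_⟩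
    by_cases h0 : a = 0
    · exact hb' fun h1 => h (by rw [h0, h1, add_zero])
    · exact ha' h0
  zero_mem' := ⟨Submodule.zero_mem _, fun h => absurd rfl h⟩
  smul_mem' := by
    rintro t a ⟨ha, ha'⟩
    refine ⟨Submodule.smul_mem _ _ ha, fun h => ha' fun h0 => h (by rw [h0, smul_zero])⟩

theorem mem_WS {q : ℂ} {n : ℕ} {T : ℕ → A} {c : ℕ → ℤ} {v : A} :
    v ∈ WS q n T c ↔ v ∈ EV q T n c ∧ (v ≠ 0 → Good n c) := Iff.rfl

theorem WS_mul {q : ℂ} {n : ℕ} {T : ℕ → A} {c : ℕ → ℤ} {v : A} (h : v ∈ WS q n T c) (x : A) :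
    v * x ∈ WS q n T c := by
  refine ⟨fun j hj => ?_, fun h0 => h.2 fun h1 => h0 (by rw [h1, zero_mul])⟩
  rw [← mul_assoc, h.1 j hj, smul_mul_assoc]

theorem Good.sep {q : ℂ} {n : ℕ} (G : GQ q n) {c d : ℕ → ℤ} (hc : Good n c) (hd : Good n d)
    (hne : c ≠ d) : ∃ j < n, zc q (c j) ≠ zc q (d j) := by
  classical
  have hex : ∃ j, c j ≠ d j := by
    by_contra h
    push Not at h
    exact hne (funext h)
  have h1 := Nat.find_spec hex
  have h2 : ∀ j < Nat.find hex, c j = d j := fun j hj => not_not.1 (Nat.find_min hex hj)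
  set j := Nat.find hex with hj
  have hjn : j < n := by
    by_contra h
    exact h1 (by rw [hc.2 j (by omega), hd.2 j (by omega)])
  refine ⟨j, hjn, fun e => h1 ?_⟩
  have a1 : GS (j + 1) (Function.update c j (c j)) := by
    rw [Function.update_eq_self]; exact hc.1.mono (by omega)
  have a2 : GS (j + 1) (Function.update c j (d j)) := by
    refine (hd.1.mono (by omega : j + 1 ≤ n)).congr fun i hi => ?_
    by_cases hij : i = j
    · subst hij; rw [upd_eq]
    · rw [upd_lt (by omega), h2 i (by omega)]
  have a3 := a1.next_bound a2
  exact G.inj (by omega) e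

theorem WS_indep {q : ℂ} {n : ℕ} {T : ℕ → A} (G : GQ q n) (s : Finset (ℕ → ℤ)) :
    ∀ u : (ℕ → ℤ) → A, (∀ c ∈ s, u c ∈ WS q n T c) → ∑ c ∈ s, u c = 0 → ∀ c ∈ s, u c = 0 := by
  classical
  induction s using Finset.induction_on with
  | empty => intro u _ _ c hc; simp at hc
  | insert c0 s h0 ih =>
    intro u hu hs
    have hs' : ∀ c ∈ s, u c = 0 := by
      intro c hc
      by_contra hne
      have hc0 : u c0 = 0 → ∑ c ∈ s, u c = 0 := by
        intro h
        rw [Finset.sum_insert h0, h, zero_add] at hs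
        exact hs
      by_cases hz : u c0 = 0
      · exact hne (ih u (fun c hc => hu c (by simp [hc])) (hc0 hz) c hc)
      have g0 := (hu c0 (by simp)).2 hz
      have g1 := (hu c (by simp [hc])).2 hne
      obtain ⟨j, hj, hz⟩ := g1.sep G g0 (fun h => h0 (h ▸ hc))
      have key := ih (fun c => (zc q (c j) - zc q (c0 j)) • u c)
        (fun c hc => Submodule.smul_mem _ _ (hu c (by simp [hc]))) (by
          have h1 := congrArg (fun x => jm T j * x - zc q (c0 j) • x) hs
          simp only [mul_zero, smul_zero, sub_zero, Finset.mul_sum, Finset.smul_sum,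
            ← Finset.sum_sub_distrib] at h1
          rw [Finset.sum_insert h0, (hu c0 (by simp)).1 j hj, sub_self, zero_add] at h1
          rw [← h1]
          refine Finset.sum_congr rfl fun c hc => ?_
          rw [(hu c (by simp [hc])).1 j hj, sub_smul]) c hc
      rcases smul_eq_zero.1 key with h | h
      · exact hz (sub_eq_zero.1 h)
      · exact hne h
    intro c hc
    rcases Finset.mem_insert.1 hc with rfl | hc
    · rw [Finset.sum_insert h0, Finset.sum_eq_zero hs', add_zero] at hs
      exact hs
    · exact hs' c hc

theorem WS_top {q : ℂ} {n : ℕ} {T : ℕ → A} (G : GQ q n) (H : HS q n T) (v : A) :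
    v ∈ ⨆ c, WS q n T c := by
  have key : ∀ k, k ≤ n → v ∈ Submodule.span ℂ
      {w : A | ∃ c, GS k c ∧ (∀ j, k ≤ j → c j = 0) ∧ w ∈ EV q T k c} := by
    intro k
    induction k with
    | zero =>
      intro _
      refine Submodule.subset_span ⟨0, fun m hm => by omega, fun _ _ => rfl, fun m hm => by omega⟩
    | succ k ih =>
      intro hk
      refine (Submodule.span_le.2 ?_) (ih (by omega))
      rintro w ⟨c, hc, h0, hw⟩
      refine Submodule.span_mono ?_ (SS_all G H k (by omega) c hc w hw)
      rintro x ⟨b, hb, hx⟩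
      refine ⟨_, hb, fun j hj => ?_, hx⟩
      rw [Function.update_of_ne (by omega)]
      exact h0 j (by omega)
  refine (Submodule.span_le.2 ?_) (key n le_rfl)
  rintro w ⟨c, hc, h0, hw⟩
  exact Submodule.mem_iSup_of_mem c ⟨hw, fun _ => ⟨hc, h0⟩⟩

/-- decompositions of one into weight vectors -/
structure DC (q : ℂ) (n : ℕ) (T : ℕ → A) (e : (ℕ → ℤ) →₀ A) : Prop where
  mem : ∀ c, e c ∈ WS q n T c
  sum : (e.sum fun _ x => x) = 1

theorem DC_exists {q : ℂ} {n : ℕ} {T : ℕ → A} (G : GQ q n) (H : HS q n T) :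
    ∃ e, DC q n T e := by
  obtain ⟨e, h1, h2⟩ := (Submodule.mem_iSup_iff_exists_finsupp _ _).1 (WS_top G H (1 : A))
  exact ⟨e, h1, h2⟩

theorem DC.unique {q : ℂ} {n : ℕ} {T : ℕ → A} (G : GQ q n) {e e' : (ℕ → ℤ) →₀ A}
    (h : DC q n T e) (h' : DC q n T e') : e = e' := by
  classical
  have key := WS_indep (T := T) G (e - e').support (fun c => (e - e') c)
    (fun c _ => Submodule.sub_mem _ (h.mem c) (h'.mem c)) (by
      have : ((e - e').sum fun _ x => x) = 0 := by
        rw [Finsupp.sum_sub_index (by intros; rfl), h.sum, h'.sum, sub_self]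
      exact this)
  rw [← sub_eq_zero]
  ext c
  by_cases hc : c ∈ (e - e').support
  · exact key c hc
  · exact Finsupp.notMem_support_iff.1 hc

open Classical in
theorem DC.proj {q : ℂ} {n : ℕ} {T : ℕ → A} (G : GQ q n) {e : (ℕ → ℤ) →₀ A}
    (h : DC q n T e) {c : ℕ → ℤ} {v : A} (hv : v ∈ WS q n T c) (c' : ℕ → ℤ) :
    e c' * v = if c' = c then v else 0 := by
  have key := WS_indep (T := T) G (insert c' (insert c e.support))
    (fun c' => e c' * v - if c' = c then v else 0) (by
      intro d _
      refine Submodule.sub_mem _ (WS_mul (h.mem d) v) ?_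
      split_ifs with hd
      · rw [hd]; exact hv
      · exact Submodule.zero_mem _) (by
      rw [Finset.sum_sub_distrib, ← Finset.sum_mul]
      have h1 : ∑ d ∈ insert c' (insert c e.support), e d = 1 := by
        rw [← h.sum]
        symm
        refine Finset.sum_subset (by intro x hx; simp [hx]) fun x _ hx => ?_
        exact Finsupp.notMem_support_iff.1 hx
      rw [h1, one_mul, Finset.sum_ite_eq', if_pos (by simp), sub_self]) c' (by simp)
  exact sub_eq_zero.1 key

theorem DC.ext {q : ℂ} {n : ℕ} {T : ℕ → A} {e : (ℕ → ℤ) →₀ A}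
    (h : DC q n T e) {x y : A} (hxy : ∀ c, ∀ v ∈ WS q n T c, x * v = y * v) : x = y := by
  have h1 : x * (e.sum fun _ x => x) = y * (e.sum fun _ x => x) := by
    rw [Finsupp.sum, Finset.mul_sum, Finset.mul_sum]
    exact Finset.sum_congr rfl fun c _ => hxy c _ (h.mem c)
  rwa [h.sum, mul_one, mul_one] at h1

theorem jm_map {B : Type*} [Ring B] [Algebra ℂ B] (F : A →ₐ[ℂ] B) (T : ℕ → A) (k : ℕ) :
    F (jm T k) = jm (fun i => F (T i)) k := by
  induction k with
  | zero => simp [jm]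
  | succ k ih => simp [jm, ih]

theorem DC.map {B : Type*} [Ring B] [Algebra ℂ B] (F : A →ₐ[ℂ] B) {q : ℂ} {n : ℕ} {T : ℕ → A}
    {e : (ℕ → ℤ) →₀ A} (h : DC q n T e) :
    DC q n (fun i => F (T i)) (e.mapRange F (map_zero F)) := by
  refine ⟨fun c => ⟨fun j hj => ?_, fun h0 => ?_⟩, ?_⟩
  · rw [Finsupp.mapRange_apply, ← jm_map, ← map_mul, (h.mem c).1 j hj, map_smul]
  · rw [Finsupp.mapRange_apply] at h0
    exact (h.mem c).2 fun h1 => h0 (by rw [h1, map_zero])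
  · rw [Finsupp.sum_mapRange_index (by intros; rfl), ← map_finsuppSum, h.sum, map_one]

end

noncomputable section

variable {A : Type*} [Ring A] [Algebra ℂ A]

def kp (q : ℂ) (d : ℤ) : ℂ := q ^ (2 * d) / zc q d

def gm (q : ℂ) (d : ℤ) : ℂ := 1 + kp q d * kp q (-d)

def rr (q q' : ℂ) (d : ℤ) : ℂ := if 0 < d then gm q' d / gm q d else 1

theorem kp_neg {q : ℂ} (hq : q ≠ 0) {d : ℤ} (h : zc q d ≠ 0) : kp q (-d) = (q - q⁻¹) - kp q d := by
  have h1 := zc_neg hq (-d)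
  rw [neg_neg] at h1
  have h2 := zc_hq hq d
  have h3 : q ^ (2 * -d) * q ^ (2 * d) = 1 := by rw [← zpow_add₀ hq]; simp
  have h4 : q ^ (2 * -d) ≠ 0 := zpow_ne_zero _ hq
  unfold kp
  rw [h1]
  generalize q - q⁻¹ = t at *
  generalize q ^ (2 * -d) = x at *
  generalize q ^ (2 * d) = y at *
  generalize zc q d = z at *
  field_simp
  linear_combination -h2

theorem kp_key {q : ℂ} (hq : q ≠ 0) {u v : ℤ} (hu : zc q u ≠ 0) (hv : zc q v ≠ 0)
    (hw : zc q (u + v) ≠ 0) :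
    kp q (u + v) * (kp q u + kp q v - (q - q⁻¹)) = kp q u * kp q v := by
  have h1 := zc_sub hq (u + v) v
  have h2 : q ^ (2 * (u + v)) = q ^ (2 * u) * q ^ (2 * v) := by
    rw [← zpow_add₀ hq]; congr 1; ring
  rw [add_sub_cancel_right] at h1
  have h3 := zc_hq hq u
  have h4 := zc_hq hq v
  unfold kp
  rw [h2]
  have h5 : zc q (u + v) = zc q v + q ^ (2 * v) * zc q u := by linear_combination h1
  rw [h5] at hw ⊢
  generalize q - q⁻¹ = t at *
  rw [← h3, ← h4]
  rw [← h4] at hw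
  generalize zc q u = x at *
  generalize zc q v = z at *
  generalize hs : z + (1 + t * z) * x = s at *
  field_simp
  linear_combination ((1 + t * x) * (1 + t * z)) * hs

theorem kp_ab {q : ℂ} (hq : q ≠ 0) (a b : ℤ) (h : zc q (b - a) ≠ 0) :
    kp q (b - a) * zc q a + kp q (-(b - a)) * zc q b + 1 = 0 := by
  rw [kp_neg hq h]
  have h1 := zc_sub hq b a
  have h2 : q ^ (2 * b) = q ^ (2 * (b - a)) * q ^ (2 * a) := by
    rw [← zpow_add₀ hq]; congr 1; ring
  have h3 := zc_hq hq b
  have h4 : kp q (b - a) * zc q (b - a) = q ^ (2 * (b - a)) := by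
    unfold kp; field_simp
  linear_combination h3 + h2 - q ^ (2 * a) * h4 - kp q (b - a) * h1

theorem gm_neg (q : ℂ) (d : ℤ) : gm q (-d) = gm q d := by
  unfold gm; rw [neg_neg, mul_comm]

theorem gm_eq {q : ℂ} {n : ℕ} (G : GQ q n) {d : ℤ} (h : zc q d ≠ 0) :
    gm q d * zc q d ^ 2 = (zc q d - zc q 1) * (zc q d - zc q (-1)) := by
  have h1 := ph_scalar G 0 (zc q d)
  have h2 := zc_hq G.ne d
  have h3 : kp q d * zc q d = q ^ (2 * d) := by unfold kp; field_simp
  unfold gm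
  rw [kp_neg G.ne h]
  rw [zc_zero] at h1
  simp only [mul_zero, zpow_zero, mul_one, zero_add, zero_sub, sub_zero] at h1
  linear_combination -h1 + ((q - q⁻¹) * zc q d - kp q d * zc q d - q ^ (2 * d)) * h3 +
    (1 + q ^ (2 * d)) * h2

theorem gm_one {q : ℂ} {n : ℕ} (G : GQ q n) (hn : 1 ≤ n) {d : ℤ} (h : |d| = 1) : gm q d = 0 := by
  have hz : zc q d ≠ 0 := G.nz d (by rintro rfl; simp at h) (by omega)
  have h1 := gm_eq G hz
  have h2 : gm q d * zc q d ^ 2 = 0 := by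
    rw [h1]
    rcases (abs_eq (by norm_num : (0:ℤ) ≤ 1)).1 h with rfl | rfl <;> simp
  exact (mul_eq_zero.1 h2).resolve_right (pow_ne_zero _ hz)

theorem gm_ne {q : ℂ} {n : ℕ} (G : GQ q n) {d : ℤ} (h : 2 ≤ |d|) (hn : |d| < n) : gm q d ≠ 0 := by
  intro h0
  have hz : zc q d ≠ 0 := G.nz d (by rintro rfl; simp at h) (by omega)
  have h1 := gm_eq G hz
  rw [h0, zero_mul] at h1
  rcases mul_eq_zero.1 h1.symm with h2 | h2
  · have := G.inj (a := d) (b := 1) (by rw [abs_le]; rw [abs_lt] at hn; omega) (sub_eq_zero.1 h2)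
    subst this; simp at h
  · have := G.inj (a := d) (b := -1) (by rw [abs_le]; rw [abs_lt] at hn; omega) (sub_eq_zero.1 h2)
    subst this; simp at h

theorem rr_mul {q q' : ℂ} {n : ℕ} (G : GQ q n) (G' : GQ q' n) {d : ℤ} (h0 : d ≠ 0)
    (hn : |d| < n) : rr q q' d * (rr q q' (-d) * gm q d) = gm q' d := by
  by_cases h1 : |d| = 1
  · have : 1 ≤ n := by omega
    rw [gm_one G this h1, gm_one G' this h1]; ring
  · have h2 : 2 ≤ |d| := by have := abs_pos.2 h0; omega
    have h3 := gm_ne G h2 hn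
    unfold rr
    rw [gm_neg, gm_neg]
    rcases lt_or_gt_of_ne h0 with h | h
    · rw [if_neg (by omega), if_pos (by omega)]
      field_simp
    · rw [if_pos (by omega), if_neg (by omega)]
      field_simp

theorem rr_inv {q q' : ℂ} {n : ℕ} (G : GQ q n) (G' : GQ q' n) {d : ℤ} (h2 : 2 ≤ |d|)
    (hn : |d| < n) : rr q' q d * rr q q' d = 1 := by
  have h3 := gm_ne G h2 hn
  have h4 := gm_ne G' h2 hn
  unfold rr
  split_ifs
  · field_simp
  · simp

/-- abstract braid expansion -/
theorem braid_expand {S1 S2 v v1 v2 v12 v21 v121 v212 : A} {h ku kv kw ru rv rw fu fv : ℂ}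
    (a1 : S1 * v = ku • v + ru • v1) (a2 : S2 * v = kv • v + rv • v2)
    (b1 : S2 * v1 = kw • v1 + rw • v21) (b2 : S1 * v2 = kw • v2 + rw • v12)
    (c1 : S1 * v1 = (h - ku) • v1 + fu • v) (c2 : S2 * v2 = (h - kv) • v2 + fv • v)
    (d1 : S1 * v21 = kv • v21 + rv • v121) (d2 : S2 * v12 = ku • v12 + ru • v212)
    (e1 : ru * fu = 1 + ku * (h - ku)) (e2 : rv * fv = 1 + kv * (h - kv))
    (key : kw * (ku + kv - h) = ku * kv) :
    S1 * (S2 * (S1 * v)) - S2 * (S1 * (S2 * v)) = (ru * rv * rw) • (v121 - v212) := by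
  simp only [a1, a2, b1, b2, c1, c2, d1, d2, mul_add, mul_smul_comm]
  simp only [smul_add, smul_smul]
  match_scalars
  · linear_combination kw * e1 - kw * e2 - (ku - kv) * key
  · linear_combination -ru * key
  · linear_combination rv * key
  · ring
  · ring
  · ring
  · ring

end

noncomputable section

variable {A : Type*} [Ring A] [Algebra ℂ A]

/-- consecutive difference -/
def df (i : ℕ) (c : ℕ → ℤ) : ℤ := c (i + 1) - c i

theorem Good.df_ne {n : ℕ} {c : ℕ → ℤ} (h : Good n c) {i : ℕ} (hi : i + 1 < n) : df i c ≠ 0 := by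
  intro h0
  unfold df at h0
  obtain ⟨r, h1, h2, -⟩ := ((h.1 (i + 1) hi).2.2 i (by omega) (by omega)).1
  omega

theorem Good.df2_ne {n : ℕ} {c : ℕ → ℤ} (h : Good n c) {i : ℕ} (hi : i + 2 < n) :
    df i c + df (i + 1) c ≠ 0 := by
  intro h0
  unfold df at h0
  have e : c i = c (i + 2) := by
    have : c (i + 1 + 1) = c (i + 2) := rfl
    omega
  obtain ⟨⟨r, h1, h2, h3⟩, ⟨s, h4, h5, h6⟩⟩ := (h.1 (i + 2) hi).2.2 i (by omega) e
  obtain rfl : r = i + 1 := by omega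
  obtain rfl : s = i + 1 := by omega
  omega

theorem Good.df_lt {n : ℕ} {c : ℕ → ℤ} (h : Good n c) {i : ℕ} (hi : i + 1 < n) : |df i c| < n :=
  h.1.bound hi (by omega)

theorem Good.df2_lt {n : ℕ} {c : ℕ → ℤ} (h : Good n c) {i : ℕ} (hi : i + 2 < n) :
    |df i c + df (i + 1) c| < n := by
  have := h.1.bound hi (by omega : i < n)
  unfold df
  have e : c (i + 1) - c i + (c (i + 1 + 1) - c (i + 1)) = c (i + 2) - c i := by
    have : c (i + 1 + 1) = c (i + 2) := rfl
    omega
  rwa [e]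

theorem Good.swap {n : ℕ} {c : ℕ → ℤ} (h : Good n c) {i : ℕ} (hi : i + 1 < n)
    (h2 : 2 ≤ |df i c|) : Good n (sw i c) := by
  refine ⟨h.1.swap hi (by rw [abs_sub_comm]; exact h2), fun j hj => ?_⟩
  rw [sw_ne c (by omega) (by omega)]
  exact h.2 j hj

theorem df_sw (i : ℕ) (c : ℕ → ℤ) : df i (sw i c) = - df i c := by
  unfold df; rw [sw_left, sw_right]; ring

theorem df_sw_r (i : ℕ) (c : ℕ → ℤ) : df (i + 1) (sw i c) = df i c + df (i + 1) c := by
  unfold df; rw [sw_right, sw_ne c (by omega) (by omega)]; ring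

theorem df_sw_l (i : ℕ) (c : ℕ → ℤ) : df i (sw (i + 1) c) = df i c + df (i + 1) c := by
  unfold df; rw [sw_left, sw_ne c (by omega) (by omega)]; ring

theorem df_sw_far {i j : ℕ} (c : ℕ → ℤ) (h : i + 2 ≤ j) : df i (sw j c) = df i c := by
  unfold df; rw [sw_ne c (by omega) (by omega), sw_ne c (by omega) (by omega)]

theorem df_sw_far' {i j : ℕ} (c : ℕ → ℤ) (h : i + 2 ≤ j) : df j (sw i c) = df j c := by
  unfold df; rw [sw_ne c (by omega) (by omega), sw_ne c (by omega) (by omega)]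

/-- the normalized intertwiner on a weight vector -/
def ps (q : ℂ) (T : ℕ → A) (i : ℕ) (c : ℕ → ℤ) (v : A) : A := T i * v - kp q (df i c) • v

theorem ps_zero (q : ℂ) (T : ℕ → A) (i : ℕ) (c : ℕ → ℤ) : ps q T i c 0 = 0 := by simp [ps]

section
variable {q : ℂ} {n : ℕ} {T : ℕ → A} (G : GQ q n) (H : HS q n T)
include G

theorem WS_nz {c : ℕ → ℤ} (hc : Good n c) {i : ℕ} (hi : i + 1 < n) : zc q (df i c) ≠ 0 :=
  G.nz _ (hc.df_ne hi) (hc.df_lt hi).le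

include H

theorem ph_ps {c : ℕ → ℤ} {v : A} (hv : v ∈ WS q n T c) {i : ℕ} (hi : i + 1 < n) (h0 : v ≠ 0) :
    ph q T i * v = (zc q (c i) - zc q (c (i + 1))) • ps q T i c v := by
  have hz := WS_nz G (hv.2 h0) hi
  have h1 := zc_sub G.ne (c (i + 1)) (c i)
  have h2 := zc_hq G.ne (c (i + 1))
  have h3 : kp q (df i c) * zc q (df i c) = q ^ (2 * df i c) := by unfold kp; field_simp
  have h4 : q ^ (2 * c (i + 1)) = q ^ (2 * (df i c)) * q ^ (2 * c i) := by
    rw [← zpow_add₀ G.ne]; congr 1; unfold df; ring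
  have h5 : (zc q (c (i + 1)) - zc q (c i)) * kp q (df i c) = 1 + (q - q⁻¹) * zc q (c (i + 1)) := by
    rw [h1, h2, h4, ← h3]; unfold df; ring
  unfold ph ps
  simp only [add_mul, mul_assoc, sub_mul, hv.1 i (by omega), hv.1 (i + 1) hi, one_mul,
    smul_mul_assoc, mul_sub, mul_smul_comm]
  match_scalars
  · ring
  · linear_combination -h5

theorem ps_adj {c : ℕ → ℤ} {v : A} (hv : v ∈ WS q n T c) {i : ℕ} (hi : i + 1 < n)
    (h1 : |df i c| = 1) : ps q T i c v = 0 := by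
  by_cases h0 : v = 0
  · rw [h0, ps_zero]
  have hg := hv.2 h0
  have hck : GS i c := hg.1.mono (by omega)
  have e := ph_ps G H hv hi h0
  have hne : zc q (c i) - zc q (c (i + 1)) ≠ 0 := by
    intro h
    have := G.inj (hg.1.bound (by omega : i < n) hi).le (sub_eq_zero.1 h)
    exact hg.df_ne hi (by unfold df; omega)
  have hp : ph q T i * v = 0 := by
    by_contra h2
    have hm := ph_EV G H (m := n) (i := i) le_rfl hi hv.1
    have hm2 := ph_EV_lt G H (i := i) hi (EV_mono hv.1 (by omega))
    have hm1 := hm i (by omega)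
    rw [sw_left] at hm1
    obtain ⟨b, hb, e⟩ := (SS_all G H i (by omega)).wt hck hm2 hm1 h2
    refine no_two G (a := c i) (b := b) (ε := df i c) (k := i) (by omega) ?_ ?_ hb ?_
    · exact (abs_eq (by norm_num)).1 h1
    · simpa using hg.1.mono (by omega)
    · rw [← e]; congr 1; unfold df; ring
  rw [hp] at e
  exact (smul_eq_zero.1 e.symm).resolve_left hne

theorem ps_WS {c : ℕ → ℤ} {v : A} (hv : v ∈ WS q n T c) {i : ℕ} (hi : i + 1 < n) :
    ps q T i c v ∈ WS q n T (sw i c) := by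
  by_cases h0 : v = 0
  · rw [h0, ps_zero]; exact Submodule.zero_mem _
  have hg := hv.2 h0
  by_cases h1 : |df i c| = 1
  · rw [ps_adj G H hv hi h1]; exact Submodule.zero_mem _
  have h2 : 2 ≤ |df i c| := by have := abs_pos.2 (hg.df_ne hi); omega
  refine ⟨?_, fun _ => hg.swap hi h2⟩
  have e := ph_ps G H hv hi h0
  have hne : zc q (c i) - zc q (c (i + 1)) ≠ 0 := by
    intro h
    have := G.inj (hg.1.bound (by omega : i < n) hi).le (sub_eq_zero.1 h)
    exact hg.df_ne hi (by unfold df; omega)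
  have hm := ph_EV G H (m := n) (i := i) le_rfl hi hv.1
  rw [e] at hm
  exact (Submodule.smul_mem_iff _ hne).1 hm

theorem ps_ps {c : ℕ → ℤ} {v : A} (hv : v ∈ WS q n T c) {i : ℕ} (hi : i + 1 < n) :
    ps q T i (sw i c) (ps q T i c v) = gm q (df i c) • v := by
  by_cases h0 : v = 0
  · rw [h0, ps_zero, ps_zero, smul_zero]
  have hz := WS_nz G (hv.2 h0) hi
  have h1 := congrArg (· * v) (H.quad i hi)
  simp only [add_mul, smul_mul_assoc, one_mul, mul_assoc] at h1
  unfold ps gm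
  rw [df_sw, kp_neg G.ne hz]
  simp only [mul_sub, mul_smul_comm, h1]
  module

omit H

/-- conversion to a transformed action -/
def PA (q q' : ℂ) (n : ℕ) (T S : ℕ → A) : Prop :=
  ∀ i, i + 1 < n → ∀ c, ∀ v ∈ WS q n T c,
    S i * v = kp q' (df i c) • v + rr q q' (df i c) • ps q T i c v

end

section
variable {q q' : ℂ} {n : ℕ} {T S : ℕ → A} (G : GQ q n) (G' : GQ q' n) (H : HS q n T)
  (P : PA q q' n T S)
include G G' H P

theorem PA.back {c : ℕ → ℤ} {v : A} (hv : v ∈ WS q n T c) {i : ℕ} (hi : i + 1 < n) (h0 : v ≠ 0) :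
    S i * ps q T i c v = ((q' - q'⁻¹) - kp q' (df i c)) • ps q T i c v +
      (rr q q' (-df i c) * gm q (df i c)) • v := by
  have hz := WS_nz G' (hv.2 h0) hi
  rw [P i hi _ _ (ps_WS G H hv hi), ps_ps G H hv hi, df_sw, kp_neg G'.ne hz, smul_smul]

theorem PA.rf {c : ℕ → ℤ} (hc : Good n c) {i : ℕ} (hi : i + 1 < n) :
    rr q q' (df i c) * (rr q q' (-df i c) * gm q (df i c)) =
      1 + kp q' (df i c) * ((q' - q'⁻¹) - kp q' (df i c)) := by
  rw [rr_mul G G' (hc.df_ne hi) (hc.df_lt hi), gm, kp_neg G'.ne (WS_nz G' hc hi)]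

theorem PA.quad {c : ℕ → ℤ} {v : A} (hv : v ∈ WS q n T c) {i : ℕ} (hi : i + 1 < n) :
    S i * (S i * v) = (q' - q'⁻¹) • (S i * v) + v := by
  by_cases h0 : v = 0
  · simp [h0]
  have e := PA.rf G G' H P (hv.2 h0) hi
  rw [P i hi c v hv, mul_add, mul_smul_comm, mul_smul_comm, PA.back G G' H P hv hi h0,
    P i hi c v hv]
  match_scalars
  · linear_combination e
  · ring

theorem PA.comm {c : ℕ → ℤ} {v : A} (hv : v ∈ WS q n T c) {i j : ℕ} (hij : i + 2 ≤ j)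
    (hj : j + 1 < n) : S i * (S j * v) = S j * (S i * v) := by
  have hi : i + 1 < n := by omega
  rw [P i hi c v hv, P j hj c v hv]
  simp only [mul_add, mul_smul_comm]
  rw [P i hi c v hv, P j hj c v hv, P i hi _ _ (ps_WS G H hv hj), P j hj _ _ (ps_WS G H hv hi),
    df_sw_far c hij, df_sw_far' c hij]
  have h1 := congrArg (· * v) (H.comm i j hij hj)
  simp only [mul_assoc] at h1
  have h2 : ps q T i (sw j c) (ps q T j c v) = ps q T j (sw i c) (ps q T i c v) := by
    unfold ps
    rw [df_sw_far c hij, df_sw_far' c hij]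
    simp only [mul_sub, mul_smul_comm, h1]
    module
  rw [h2]
  module

omit P in
theorem PA.braid_aux (P : PA q q' n T S) {c : ℕ → ℤ} {v : A} (hv : v ∈ WS q n T c) {i : ℕ}
    (hi : i + 2 < n) (h0 : v ≠ 0) :
    S i * (S (i + 1) * (S i * v)) - S (i + 1) * (S i * (S (i + 1) * v)) =
    (rr q q' (df i c) * rr q q' (df (i + 1) c) * rr q q' (df i c + df (i + 1) c)) •
      (ps q T i (sw (i + 1) (sw i c)) (ps q T (i + 1) (sw i c) (ps q T i c v)) -
       ps q T (i + 1) (sw i (sw (i + 1) c)) (ps q T i (sw (i + 1) c) (ps q T (i + 1) c v))) := by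
  have hg := hv.2 h0
  have hi1 : i + 1 < n := by omega
  have hi2 : i + 1 + 1 < n := by omega
  have m1 := ps_WS G H hv hi1
  have m2 := ps_WS G H hv hi2
  have m21 := ps_WS G H m1 hi2
  have m12 := ps_WS G H m2 hi1
  have d1 : df i (sw (i + 1) (sw i c)) = df (i + 1) c := by
    rw [df_sw_l, df_sw, df_sw_r]; ring
  have d2 : df (i + 1) (sw i (sw (i + 1) c)) = df i c := by
    rw [df_sw_r, df_sw, df_sw_l]; ring
  refine braid_expand (v12 := ps q T i (sw (i + 1) c) (ps q T (i + 1) c v))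
    (v21 := ps q T (i + 1) (sw i c) (ps q T i c v)) (P i hi1 c v hv) (P (i + 1) hi2 c v hv) ?_ ?_ (PA.back G G' H P hv hi1 h0)
    (PA.back G G' H P hv hi2 h0) ?_ ?_ (PA.rf G G' H P hg hi1) (PA.rf G G' H P hg hi2)
    (kp_key G'.ne (WS_nz G' hg hi1) (WS_nz G' hg hi2)
      (G'.nz _ (hg.df2_ne hi) (hg.df2_lt hi).le))
  · rw [P _ hi2 _ _ m1, df_sw_r]
  · rw [P _ hi1 _ _ m2, df_sw_l]
  · rw [P _ hi1 _ _ m21, d1]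
  · rw [P _ hi2 _ _ m12, d2]

end

theorem rr_self {q : ℂ} {n : ℕ} (G : GQ q n) {d : ℤ} (h2 : 2 ≤ |d|) (hn : |d| < n) :
    rr q q d = 1 := by
  unfold rr
  split_ifs
  · exact div_self (gm_ne G h2 hn)
  · rfl

theorem PA_self {q : ℂ} {n : ℕ} {T : ℕ → A} (G : GQ q n) (H : HS q n T) : PA q q n T T := by
  intro i hi c v hv
  by_cases h0 : v = 0
  · simp [h0, ps_zero]
  have hg := hv.2 h0
  by_cases h1 : |df i c| = 1
  · have := ps_adj G H hv hi h1
    rw [this, smul_zero, add_zero]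
    exact sub_eq_zero.1 this
  · rw [rr_self G (by have := abs_pos.2 (hg.df_ne hi); omega) (hg.df_lt hi)]
    unfold ps; module

end

noncomputable section

variable {A : Type*} [Ring A] [Algebra ℂ A]

theorem rr_zero {q q' : ℂ} {d : ℤ} (h : rr q q d = 0) : rr q q' d = 0 := by
  unfold rr at *
  split_ifs at * with h1
  · rcases div_eq_zero_iff.1 h with h | h <;> simp [h]
  · simp at h

section
variable {q q' : ℂ} {n : ℕ} {T S : ℕ → A} (G : GQ q n) (G' : GQ q' n) (H : HS q n T)
  (P : PA q q' n T S)
include G G' H P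

theorem PA.braid {c : ℕ → ℤ} {v : A} (hv : v ∈ WS q n T c) {i : ℕ} (hi : i + 2 < n) :
    S i * (S (i + 1) * (S i * v)) = S (i + 1) * (S i * (S (i + 1) * v)) := by
  by_cases h0 : v = 0
  · simp [h0]
  have h1 := PA.braid_aux G G' H P hv hi h0
  have h2 := PA.braid_aux G G H (PA_self G H) hv hi h0
  have h3 := congrArg (· * v) (H.braid i hi)
  simp only [mul_assoc] at h3
  rw [h3, sub_self] at h2
  rw [← sub_eq_zero, h1]
  rcases smul_eq_zero.1 h2.symm with h | h
  · rcases mul_eq_zero.1 h with h | h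
    · rcases mul_eq_zero.1 h with h | h
      · rw [rr_zero h]; simp
      · rw [rr_zero h]; simp
    · rw [rr_zero h]; simp
  · rw [h, smul_zero]

theorem PA.hs {e : (ℕ → ℤ) →₀ A} (D : DC q n T e) : HS q' n S := by
  refine ⟨fun i hi => D.ext fun c v hv => ?_, fun i hi => D.ext fun c v hv => ?_,
    fun i j hij hj => D.ext fun c v hv => ?_⟩
  · rw [mul_assoc, PA.quad G G' H P hv hi, add_mul, one_mul, smul_mul_assoc]
  · simp only [mul_assoc]; exact PA.braid G G' H P hv hi
  · simp only [mul_assoc]; exact PA.comm G G' H P hv hij hj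

theorem PA.jm {k : ℕ} (hk : k < n) : ∀ {c : ℕ → ℤ} {v : A}, v ∈ WS q n T c →
    jm S k * v = zc q' (c k) • v := by
  induction k with
  | zero =>
    intro c v hv
    by_cases h0 : v = 0
    · simp [h0]
    rw [((hv.2 h0).1 0 hk).1 rfl, zc_zero]
    simp [_root_.jm]
  | succ k ih =>
    intro c v hv
    by_cases h0 : v = 0
    · simp [h0]
    have e := PA.rf G G' H P (hv.2 h0) hk
    have hz := WS_nz G' (hv.2 h0) hk
    have e2 : kp q' (df k c) * zc q' (c k) + kp q' (-df k c) * zc q' (c (k + 1)) + 1 = 0 :=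
      kp_ab G'.ne (c k) (c (k + 1)) hz
    rw [kp_neg G'.ne hz] at e2
    show (S k * _root_.jm S k * S k + S k) * v = _
    have i1 := ih (by omega) hv
    have i2 := ih (by omega) (ps_WS G H hv hk)
    rw [sw_left] at i2
    rw [add_mul, mul_assoc, mul_assoc, P k hk c v hv]
    simp only [mul_add, mul_smul_comm, i1, i2]
    rw [P k hk c v hv, PA.back G G' H P hv hk h0]
    match_scalars
    · linear_combination zc q' (c (k + 1)) * e + kp q' (df k c) * e2
    · linear_combination rr q q' (df k c) * e2

theorem PA.ws {c : ℕ → ℤ} {v : A} (hv : v ∈ WS q n T c) : v ∈ WS q' n S c :=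
  ⟨fun _ hj => PA.jm G G' H P hj hv, hv.2⟩

theorem PA.dc {e : (ℕ → ℤ) →₀ A} (D : DC q n T e) : DC q' n S e :=
  ⟨fun c => PA.ws G G' H P (D.mem c), D.sum⟩

end

/-- the transformed generators -/
def TR (q q' : ℂ) (n : ℕ) (T : ℕ → A) (e : (ℕ → ℤ) →₀ A) (i : ℕ) : A :=
  if i + 1 < n then
    e.sum fun c x => (kp q' (df i c) • (1 : A) + rr q q' (df i c) • (T i - kp q (df i c) • (1 : A))) * x
  else 0

theorem TR_map {B : Type*} [Ring B] [Algebra ℂ B] (F : A →ₐ[ℂ] B) (q q' : ℂ) (n : ℕ) (T : ℕ → A)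
    (e : (ℕ → ℤ) →₀ A) (i : ℕ) :
    F (TR q q' n T e i) = TR q q' n (fun i => F (T i)) (e.mapRange F (map_zero F)) i := by
  unfold TR
  split_ifs
  · rw [map_finsuppSum, Finsupp.sum_mapRange_index (by intros; simp)]
    simp
  · simp

theorem TR_PA {q q' : ℂ} {n : ℕ} {T : ℕ → A} {e : (ℕ → ℤ) →₀ A} (G : GQ q n)
    (D : DC q n T e) : PA q q' n T (TR q q' n T e) := by
  classical
  intro i hi c v hv
  unfold TR
  rw [if_pos hi, Finsupp.sum, Finset.sum_mul]
  have : ∀ x ∈ e.support, (kp q' (df i x) • (1 : A) + rr q q' (df i x) •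
      (T i - kp q (df i x) • (1 : A))) * e x * v = if x = c then
      kp q' (df i c) • v + rr q q' (df i c) • ps q T i c v else 0 := by
    intro x _
    rw [mul_assoc, D.proj G hv]
    split_ifs with h
    · subst h
      simp [ps, add_mul, sub_mul]
    · simp
  rw [Finset.sum_congr rfl this, Finset.sum_ite_eq']
  split_ifs with h
  · rfl
  · have h1 := D.proj G hv c
    rw [Finsupp.notMem_support_iff.1 h, zero_mul, if_pos rfl] at h1
    rw [← h1]; simp [ps_zero]

theorem TR_TR {q q' : ℂ} {n : ℕ} {T : ℕ → A} {e : (ℕ → ℤ) →₀ A} (G : GQ q n) (G' : GQ q' n)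
    (H : HS q n T) (D : DC q n T e) (hT : ∀ i, n ≤ i + 1 → T i = 0) (i : ℕ) :
    TR q' q n (TR q q' n T e) e i = T i := by
  by_cases hi : i + 1 < n
  · have P := TR_PA (q' := q') G D
    have D' := P.dc G G' H D
    have P' := TR_PA (q' := q) G' D'
    refine D.ext fun c v hv => ?_
    by_cases h0 : v = 0
    · simp [h0]
    have hg := hv.2 h0
    rw [P' i hi c v (P.ws G G' H hv)]
    have e1 : ps q' (TR q q' n T e) i c v = rr q q' (df i c) • ps q T i c v := by
      unfold ps
      rw [P i hi c v hv]; unfold ps; module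
    rw [e1, smul_smul]
    by_cases h1 : |df i c| = 1
    · have := ps_adj G H hv hi h1
      rw [this, smul_zero, add_zero]
      exact (sub_eq_zero.1 this).symm
    · rw [rr_inv G G' (by have := abs_pos.2 (hg.df_ne hi); omega) (hg.df_lt hi)]
      unfold ps; module
  · rw [hT i (by omega), TR, if_neg hi]

end

noncomputable section

/-- generators indexed by naturals -/
def HT (q : ℂ) (n : ℕ) (i : ℕ) : HeckeAlgebra q n :=
  if h : i < n - 1 then HeckeAlgebra.T q n ⟨i, h⟩ else 0

theorem HT_of {q : ℂ} {n : ℕ} (i : Fin (n - 1)) : HT q n i = HeckeAlgebra.T q n i := by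
  simp [HT]

theorem HT_zero {q : ℂ} {n i : ℕ} (h : n ≤ i + 1) : HT q n i = 0 := by
  unfold HT; rw [dif_neg (by omega)]

theorem HT_HS (q : ℂ) (n : ℕ) : HS q n (HT q n) := by
  refine ⟨fun i hi => ?_, fun i hi => ?_, fun i j hij hj => ?_⟩
  · have := RingQuot.mkAlgHom_rel ℂ (HeckeRel.quad (q := q) (n := n) ⟨i, by omega⟩)
    simp only [map_mul, map_add, map_smul, map_one] at this
    unfold HT; rw [dif_pos (by omega)]
    exact this
  · have := RingQuot.mkAlgHom_rel ℂ (HeckeRel.braid (q := q) (n := n) ⟨i, by omega⟩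
      ⟨i + 1, by omega⟩ rfl)
    simp only [map_mul] at this
    unfold HT; rw [dif_pos (by omega), dif_pos (by omega)]
    exact this
  · have := RingQuot.mkAlgHom_rel ℂ (HeckeRel.comm (q := q) (n := n) ⟨i, by omega⟩
      ⟨j, by omega⟩ hij)
    simp only [map_mul] at this
    unfold HT; rw [dif_pos (by omega), dif_pos (by omega)]
    exact this

variable {A : Type*} [Ring A] [Algebra ℂ A]

/-- universal property -/
def HL {q : ℂ} {n : ℕ} {S : ℕ → A} (H : HS q n S) : HeckeAlgebra q n →ₐ[ℂ] A :=
  RingQuot.liftAlgHom ℂ ⟨FreeAlgebra.lift ℂ (fun i : Fin (n - 1) => S i), by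
    intro x y h
    cases h with
    | braid i j h =>
      simp only [heckeT, map_mul, FreeAlgebra.lift_ι_apply]
      rw [← h]; exact H.braid i (by omega)
    | comm i j h =>
      simp only [heckeT, map_mul, FreeAlgebra.lift_ι_apply]
      exact H.comm i j h (by omega)
    | quad i =>
      simp only [heckeT, map_mul, map_add, map_smul, map_one, FreeAlgebra.lift_ι_apply]
      exact H.quad i (by omega)⟩

theorem HL_T {q : ℂ} {n : ℕ} {S : ℕ → A} (H : HS q n S) (i : Fin (n - 1)) :
    HL H (HeckeAlgebra.T q n i) = S i := by
  unfold HL HeckeAlgebra.T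
  rw [RingQuot.liftAlgHom_mkAlgHom_apply]
  simp [heckeT]

theorem HL_HT {q : ℂ} {n : ℕ} {S : ℕ → A} (H : HS q n S) (h0 : ∀ i, n ≤ i + 1 → S i = 0) (i : ℕ) :
    HL H (HT q n i) = S i := by
  by_cases hi : i < n - 1
  · have := HL_T H ⟨i, hi⟩
    unfold HT; rw [dif_pos hi]; exact this
  · rw [HT_zero (by omega), map_zero, h0 i (by omega)]

theorem H_ext {q : ℂ} {n : ℕ} {F F' : HeckeAlgebra q n →ₐ[ℂ] A}
    (h : ∀ i, F (HT q n i) = F' (HT q n i)) : F = F' := by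
  apply RingQuot.ringQuot_ext'
  apply FreeAlgebra.hom_ext
  funext i
  have := h i
  rw [HT_of] at this
  exact this

theorem TR_zero {q q' : ℂ} {n : ℕ} {T : ℕ → A} {e : (ℕ → ℤ) →₀ A} (i : ℕ) (h : n ≤ i + 1) :
    TR q q' n T e i = 0 := by
  unfold TR; rw [if_neg (by omega)]

theorem comp_id {q q' : ℂ} {n : ℕ} (G : GQ q n) (G' : GQ q' n)
    {e : (ℕ → ℤ) →₀ HeckeAlgebra q n} {e' : (ℕ → ℤ) →₀ HeckeAlgebra q' n}
    (D : DC q n (HT q n) e) (D' : DC q' n (HT q' n) e')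
    (K : HS q' n (TR q q' n (HT q n) e)) (K' : HS q n (TR q' q n (HT q' n) e')) :
    (HL K).comp (HL K') = AlgHom.id ℂ _ := by
  apply H_ext
  intro i
  rw [AlgHom.comp_apply, HL_HT K' TR_zero, TR_map]
  have h1 : (fun i => HL K (HT q' n i)) = TR q q' n (HT q n) e := funext (HL_HT K TR_zero)
  have h2 := D'.map (HL K)
  rw [h1] at h2 ⊢
  have h3 := (TR_PA (q' := q') G D).dc G G' (HT_HS q n) D
  rw [h2.unique G' h3, TR_TR G G' (HT_HS q n) D (fun i hi => HT_zero hi)]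
  rfl

theorem hecke_equiv {q q' : ℂ} {n : ℕ} (G : GQ q n) (G' : GQ q' n) :
    Nonempty (HeckeAlgebra q n ≃ₐ[ℂ] HeckeAlgebra q' n) := by
  obtain ⟨e, D⟩ := DC_exists G (HT_HS q n)
  obtain ⟨e', D'⟩ := DC_exists G' (HT_HS q' n)
  have K := (TR_PA (q' := q') G D).hs G G' (HT_HS q n) D
  have K' := (TR_PA (q' := q) G' D').hs G' G (HT_HS q' n) D'
  exact ⟨AlgEquiv.ofAlgHom (HL K') (HL K) (comp_id G' G D' D K' K) (comp_id G G' D D' K K')⟩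

end

noncomputable section

variable {A : Type*} [Ring A] [Algebra ℂ A]

/-- descending words -/
def EW (T : ℕ → A) (k : ℕ) : ℕ → A
  | 0 => 1
  | j + 1 => EW T k j * T (k - 1 - j)

open Classical in
/-- standard words -/
def WD (T : ℕ → A) : ℕ → Finset A
  | 0 => {1}
  | k + 1 => Finset.image₂ (fun x y => x * y) (WD T k) ((Finset.range (k + 1)).image (EW T k))

theorem WD_card (T : ℕ → A) (k : ℕ) : (WD T k).card ≤ k.factorial := by
  induction k with
  | zero => simp [WD]
  | succ k ih =>
    classical
    have h1 : ((Finset.range (k + 1)).image (EW T k)).card ≤ k + 1 :=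
      Finset.card_image_le.trans (by simp)
    rw [Nat.factorial_succ, mul_comm]
    unfold WD
    exact (Finset.card_image₂_le _ _ _).trans (Nat.mul_le_mul ih h1)

theorem WD_mem {T : ℕ → A} {k j : ℕ} {x : A} (hx : x ∈ WD T k) (hj : j ≤ k) :
    x * EW T k j ∈ WD T (k + 1) := by
  classical
  unfold WD
  exact Finset.mem_image₂.2 ⟨x, hx, _, Finset.mem_image_of_mem _ (by simp; omega), rfl⟩

theorem WD_one (T : ℕ → A) (k : ℕ) : (1 : A) ∈ WD T k := by
  induction k with
  | zero => simp [WD]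
  | succ k ih => simpa [EW] using WD_mem (j := 0) ih (by omega)

theorem EW_comm {q : ℂ} {n : ℕ} {T : ℕ → A} (H : HS q n T) {k : ℕ} (hk : k + 1 ≤ n) {i : ℕ} :
    ∀ j, j ≤ k → i + 2 ≤ k - j + (if j = 0 then 1 else 0) → EW T k j * T i = T i * EW T k j := by
  intro j
  induction j with
  | zero => intro _ _; simp [EW]
  | succ j ih =>
    intro hj hi
    simp only [Nat.add_eq_zero_iff, one_ne_zero, and_false, if_false, add_zero] at hi
    have h1 := ih (by omega) (by omega)
    show EW T k j * T (k - 1 - j) * T i = T i * (EW T k j * T (k - 1 - j))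
    rw [mul_assoc, ← H.comm i (k - 1 - j) (by omega) (by omega), ← mul_assoc, h1, mul_assoc]

theorem EW_shift {q : ℂ} {n : ℕ} {T : ℕ → A} (H : HS q n T) {k : ℕ} (hk : k + 1 ≤ n) {i : ℕ}
    (hik : i + 1 < k) :
    ∀ j, j ≤ k → k - j < i + 1 → EW T k j * T (i + 1) = T i * EW T k j := by
  intro j
  induction j with
  | zero => intro _ _; omega
  | succ j ih =>
    intro hj hi
    by_cases h : k - 1 - j = i
    · obtain ⟨j, rfl⟩ : ∃ l, j = l + 1 := ⟨j - 1, by omega⟩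
      show EW T k j * T (k - 1 - j) * T (k - 1 - (j + 1)) * T (i + 1) =
        T i * (EW T k j * T (k - 1 - j) * T (k - 1 - (j + 1)))
      have e1 : k - 1 - j = i + 1 := by omega
      rw [h, e1]
      have h1 := EW_comm H hk (i := i) j (by omega) (by split_ifs <;> omega)
      have h2 := H.braid i (by omega)
      calc EW T k j * T (i + 1) * T i * T (i + 1) = EW T k j * (T (i + 1) * T i * T (i + 1)) := by
            simp only [mul_assoc]
        _ = (EW T k j * T i) * T (i + 1) * T i := by rw [← h2]; simp only [mul_assoc]
        _ = _ := by rw [h1]; simp only [mul_assoc]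
    · have h1 := ih (by omega) (by omega)
      show EW T k j * T (k - 1 - j) * T (i + 1) = T i * (EW T k j * T (k - 1 - j))
      rw [mul_assoc, H.comm (k - 1 - j) (i + 1) (by omega) (by omega), ← mul_assoc, h1, mul_assoc]

theorem WD_stable {q : ℂ} {n : ℕ} {T : ℕ → A} (H : HS q n T) : ∀ k, k ≤ n → ∀ i, i + 1 < k →
    ∀ w ∈ Submodule.span ℂ (WD T k : Set A), w * T i ∈ Submodule.span ℂ (WD T k : Set A) := by
  classical
  intro k
  induction k with
  | zero => intro _ i hi; omega
  | succ k ih =>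
    intro hk i hi w hw
    have key : ∀ j ≤ k, ∀ x ∈ Submodule.span ℂ (WD T k : Set A),
        x * EW T k j ∈ Submodule.span ℂ (WD T (k + 1) : Set A) := by
      intro j hj x hx
      induction hx using Submodule.span_induction with
      | mem x hx => exact Submodule.subset_span (WD_mem hx hj)
      | zero => simp
      | add x y _ _ h1 h2 => rw [add_mul]; exact Submodule.add_mem _ h1 h2
      | smul t x _ h => rw [smul_mul_assoc]; exact Submodule.smul_mem _ _ h
    induction hw using Submodule.span_induction with
    | zero => simp
    | add x y _ _ h1 h2 => rw [add_mul]; exact Submodule.add_mem _ h1 h2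
    | smul t x _ h => rw [smul_mul_assoc]; exact Submodule.smul_mem _ _ h
    | mem w hw =>
      obtain ⟨x, hx, y, hy, rfl⟩ := Finset.mem_image₂.1 hw
      obtain ⟨j, hj, rfl⟩ := Finset.mem_image.1 hy
      have hj : j ≤ k := by have := Finset.mem_range.1 hj; omega
      have hxs : x ∈ Submodule.span ℂ (WD T k : Set A) := Submodule.subset_span hx
      rcases lt_trichotomy (i + 1) (k - j) with h | h | h
      · rw [mul_assoc, EW_comm H hk j hj (by omega), ← mul_assoc]
        exact key j hj _ (ih (by omega) i (by omega) x hxs)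
      · have e : i = k - 1 - j := by omega
        rw [mul_assoc, e]
        exact key (j + 1) (by omega) x hxs
      · by_cases h' : i = k - j
        · obtain ⟨j, rfl⟩ : ∃ l, j = l + 1 := ⟨j - 1, by omega⟩
          have e : k - 1 - j = i := by omega
          have e2 : EW T k (j + 1) * T i = (q - q⁻¹) • EW T k (j + 1) + EW T k j := by
            show EW T k j * T (k - 1 - j) * T i = (q - q⁻¹) • (EW T k j * T (k - 1 - j)) + EW T k j
            rw [e, mul_assoc, H.quad i (by omega), mul_add, mul_smul_comm, mul_one]
          rw [mul_assoc, e2, mul_add, mul_smul_comm]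
          exact Submodule.add_mem _ (Submodule.smul_mem _ _ (key _ hj x hxs))
            (key _ (by omega) x hxs)
        · obtain ⟨i, rfl⟩ : ∃ l, i = l + 1 := ⟨i - 1, by omega⟩
          rw [mul_assoc, EW_shift H hk (by omega) j hj (by omega), ← mul_assoc]
          exact key j hj _ (ih (by omega) i (by omega) x hxs)

theorem WD_top (q : ℂ) (n : ℕ) : Submodule.span ℂ (WD (HT q n) n : Set (HeckeAlgebra q n)) = ⊤ := by
  rw [eq_top_iff]
  have key : ∀ y : FreeAlgebra ℂ (Fin (n - 1)),
      ∀ w ∈ Submodule.span ℂ (WD (HT q n) n : Set (HeckeAlgebra q n)),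
      w * RingQuot.mkAlgHom ℂ (HeckeRel q n) y ∈
        Submodule.span ℂ (WD (HT q n) n : Set (HeckeAlgebra q n)) := by
    intro y
    induction y using FreeAlgebra.induction with
    | grade0 r =>
      intro w hw
      rw [AlgHom.commutes, ← Algebra.commutes, ← Algebra.smul_def]
      exact Submodule.smul_mem _ _ hw
    | grade1 i =>
      intro w hw
      have := WD_stable (HT_HS q n) n le_rfl i (by omega) w hw
      rwa [HT_of] at this
    | mul a b ha hb =>
      intro w hw
      rw [map_mul, ← mul_assoc]; exact hb _ (ha _ hw)
    | add a b ha hb =>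
      intro w hw
      rw [map_add, mul_add]; exact Submodule.add_mem _ (ha _ hw) (hb _ hw)
  intro x _
  obtain ⟨y, rfl⟩ := RingQuot.mkAlgHom_surjective ℂ (HeckeRel q n) x
  have := key y 1 (Submodule.subset_span (WD_one _ _))
  rwa [one_mul] at this

theorem hecke_finite (q : ℂ) (n : ℕ) : Module.Finite ℂ (HeckeAlgebra q n) :=
  ⟨⟨_, WD_top q n⟩⟩

theorem hecke_finrank (q : ℂ) (n : ℕ) : Module.finrank ℂ (HeckeAlgebra q n) ≤ n.factorial := by
  have h := finrank_span_finset_le_card (R := ℂ) (WD (HT q n) n)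
  rw [Set.finrank, WD_top, finrank_top] at h
  exact h.trans (WD_card _ _)

/-- simple transpositions in the group algebra -/
def SG (n : ℕ) (i : ℕ) : MonoidAlgebra ℂ (Equiv.Perm (Fin n)) :=
  if h : i + 1 < n then
    MonoidAlgebra.of ℂ _ (Equiv.swap (⟨i, by omega⟩ : Fin n) ⟨i + 1, h⟩) else 0

theorem swap_braid_aux {X : Type*} [DecidableEq X] {a b c : X} (hab : a ≠ b) (hac : a ≠ c)
    (hbc : b ≠ c) : Equiv.swap a b * Equiv.swap b c * Equiv.swap a b =
      Equiv.swap b c * Equiv.swap a b * Equiv.swap b c := by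
  rw [Equiv.swap_mul_swap_mul_swap hab hac, Equiv.swap_comm a b, Equiv.swap_comm b c,
    Equiv.swap_mul_swap_mul_swap hbc.symm hac.symm, Equiv.swap_comm]

theorem SG_HS (n : ℕ) : HS 1 n (SG n) := by
  refine ⟨fun i hi => ?_, fun i hi => ?_, fun i j hij hj => ?_⟩
  · unfold SG
    rw [dif_pos hi, ← map_mul, Equiv.swap_mul_self, map_one]
    simp
  · unfold SG
    rw [dif_pos (by omega), dif_pos (by omega)]
    simp only [← map_mul]
    congr 1
    exact swap_braid_aux (by simp) (by simp [Fin.ext_iff]; omega) (by simp)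
  · unfold SG
    rw [dif_pos (by omega), dif_pos (by omega)]
    simp only [← map_mul]
    congr 1
    refine (Equiv.Perm.Disjoint.commute fun x => ?_).eq
    by_cases h1 : x = ⟨i, by omega⟩ ∨ x = ⟨i + 1, by omega⟩
    · right
      apply Equiv.swap_apply_of_ne_of_ne
      · rcases h1 with rfl | rfl <;> simp <;> omega
      · rcases h1 with rfl | rfl <;> simp <;> omega
    · left
      push Not at h1
      exact Equiv.swap_apply_of_ne_of_ne h1.1 h1.2

theorem SG_surj (n : ℕ) (hn : 1 ≤ n) : Function.Surjective (HL (SG_HS n)) := by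
  obtain ⟨m, rfl⟩ : ∃ m, n = m + 1 := ⟨n - 1, by omega⟩
  rw [← AlgHom.range_eq_top, eq_top_iff]
  have h1 : ∀ g : Equiv.Perm (Fin (m + 1)), MonoidAlgebra.of ℂ _ g ∈ (HL (SG_HS (m + 1))).range := by
    intro g
    have hg : g ∈ Submonoid.closure
        (Set.range fun i : Fin m => Equiv.swap i.castSucc i.succ) := by
      rw [Equiv.Perm.mclosure_swap_castSucc_succ]; trivial
    induction hg using Submonoid.closure_induction with
    | mem x hx =>
      obtain ⟨i, rfl⟩ := hx
      refine ⟨HeckeAlgebra.T 1 (m + 1) i, ?_⟩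
      have := HL_T (SG_HS (m + 1)) i
      refine this.trans ?_
      unfold SG
      rw [dif_pos (by omega)]
      rfl
    | one => rw [map_one]; exact Subalgebra.one_mem _
    | mul x y _ _ hx hy => rw [map_mul]; exact Subalgebra.mul_mem _ hx hy
  intro x _
  induction x using MonoidAlgebra.induction_on with
  | of g => exact h1 g
  | add x y hx hy => exact Subalgebra.add_mem _ (hx trivial) (hy trivial)
  | smul r x hx => exact Subalgebra.smul_mem _ (hx trivial) r

theorem hecke_one (n : ℕ) (hn : 1 ≤ n) :
    Nonempty (HeckeAlgebra 1 n ≃ₐ[ℂ] MonoidAlgebra ℂ (Equiv.Perm (Fin n))) := by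
  have := hecke_finite 1 n
  have hs := SG_surj n hn
  have hcard : Module.finrank ℂ (MonoidAlgebra ℂ (Equiv.Perm (Fin n))) = n.factorial := by
    rw [Module.finrank_eq_card_basis (MonoidAlgebra.basis (Equiv.Perm (Fin n)) ℂ),
      Fintype.card_perm, Fintype.card_fin]
  have h1 := LinearMap.finrank_le_finrank_of_surjective (f := (HL (SG_HS n)).toLinearMap) hs
  have h2 := hecke_finrank 1 n
  have h3 : Module.finrank ℂ (HeckeAlgebra 1 n) =
    Module.finrank ℂ (MonoidAlgebra ℂ (Equiv.Perm (Fin n))) := by omega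
  have hi : Function.Injective (HL (SG_HS n)).toLinearMap :=
    (LinearMap.injective_iff_surjective_of_finrank_eq_finrank h3).2 hs
  exact ⟨AlgEquiv.ofBijective (HL (SG_HS n)) ⟨hi, hs⟩⟩

end

/-- If `q ≠ 0` and `q²` is not a primitive `k`-th root of unity for
any `2 ≤ k ≤ n`, then the Iwahori–Hecke algebra `H_n(q²)` is isomorphic as a
ℂ-algebra to the group algebra `ℂ[S_n]` of the symmetric group. -/
theorem stmt_12 (n : ℕ) (hn : 1 ≤ n) (q : ℂ) (hq : q ≠ 0)
    (hroot : ∀ k : ℕ, 2 ≤ k → k ≤ n → ¬ IsPrimitiveRoot (q ^ 2) k) :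
    Nonempty (HeckeAlgebra q n ≃ₐ[ℂ] MonoidAlgebra ℂ (Equiv.Perm (Fin n))) := by
  obtain ⟨f⟩ := hecke_equiv (GQ.of_root hq hroot) (GQ.one n)
  obtain ⟨g⟩ := hecke_one n hn
  exact ⟨f.trans g⟩
end

section
/- Let r, q be nonzero complex numbers with q² ≠ 1 and n ≥ 2, and let ι : D_n(r,q) → D_{n+1}(r,q) be the canonical algebra homomorphism sending T_i to T_i (and S_i to S_i) for 1 ≤ i ≤ n−1. Then D_{n+1}(r,q) is spanned as a ℂ-vector space by the set of elements ι(A)·χ·ι(B), where A, B range over D_n(r,q) and χ ranges over {1, T_n, E_n}. -/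
section BMWaux

variable {R : Type*} [Ring R] [Algebra ℂ R]

/-- one-strand-pair facts -/
theorem bmw_aux_TS {z : ℂ} (hz : z ≠ 0) {a a' e : R} (he : e = 1 - z⁻¹ • (a - a')) :
    a = a' + z • (1 - e) := by
  rw [he, sub_sub_cancel, smul_smul, mul_inv_cancel₀ hz, one_smul]; abel

theorem bmw_aux_comm {z : ℂ} {a a' e x : R} (he : e = 1 - z⁻¹ • (a - a'))
    (h1 : a * a' = 1) (h2 : a' * a = 1) (hx : x * a = a * x) :
    x * a' = a' * x ∧ x * e = e * x := by
  have h3 : x * a' = a' * x := by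
    calc x * a' = a' * a * (x * a') := by rw [h2, one_mul]
      _ = a' * (a * x) * a' := by noncomm_ring
      _ = a' * x * (a * a') := by rw [← hx]; noncomm_ring
      _ = a' * x := by rw [h1, mul_one]
  refine ⟨h3, ?_⟩
  rw [he, mul_sub, sub_mul, mul_smul_comm, smul_mul_assoc, mul_sub, sub_mul, hx, h3, mul_one, one_mul]

/-- intertwining -/
theorem bmw_aux_conj {z : ℂ} {a a' e b b' f x : R} (he : e = 1 - z⁻¹ • (a - a'))
    (hf : f = 1 - z⁻¹ • (b - b'))
    (h1 : a' * a = 1) (h2 : b * b' = 1) (hx : x * b = a * x) :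
    x * f = e * x := by
  have h3 : x * b' = a' * x := by
    calc x * b' = a' * a * (x * b') := by rw [h1, one_mul]
      _ = a' * (a * x) * b' := by noncomm_ring
      _ = a' * x * (b * b') := by rw [← hx]; noncomm_ring
      _ = a' * x := by rw [h2, mul_one]
  rw [he, hf, mul_sub, sub_mul, mul_smul_comm, smul_mul_assoc, mul_sub, sub_mul, hx, h3, mul_one, one_mul]

theorem bmw_aux_e {z r : ℂ} (hr : r ≠ 0) {a a' e : R}
    (he : e = 1 - z⁻¹ • (a - a')) (h1 : a * a' = 1) (h2 : a' * a = 1) (heT : e * a = r⁻¹ • e) :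
    a * e = r⁻¹ • e ∧ e * a' = r • e ∧ a' * e = r • e ∧
      e * e = (1 - z⁻¹ * (r⁻¹ - r)) • e := by
  have h3 : a * e = r⁻¹ • e := by rw [(bmw_aux_comm he h1 h2 rfl).2, heT]
  have h4 : e * a' = r • e := by
    calc e * a' = r • ((r⁻¹ • e) * a') := by
            rw [smul_mul_assoc, smul_smul, mul_inv_cancel₀ hr, one_smul]
      _ = r • e := by rw [← heT, mul_assoc, h1, mul_one]
  have h5 : a' * e = r • e := by
    calc a' * e = r • (a' * (r⁻¹ • e)) := by
            rw [mul_smul_comm, smul_smul, mul_inv_cancel₀ hr, one_smul]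
      _ = r • e := by rw [← h3, ← mul_assoc, h2, one_mul]
  refine ⟨h3, h4, h5, ?_⟩
  conv_lhs => rw [he]
  rw [sub_mul, one_mul, smul_mul_assoc, sub_mul, ← he, h3, h5]
  module

theorem bmw_aux_sq {z r : ℂ} (hz : z ≠ 0) {b b' f : R} (hf : f = 1 - z⁻¹ • (b - b'))
    (hb2 : b' * b = 1) (hfT : f * b = r⁻¹ • f) : b * b = 1 + z • b - (z * r⁻¹) • f := by
  have hb := bmw_aux_TS hz hf
  have h : b * b = (b' + z • (1 - f)) * b := by rw [← hb]
  rw [h, add_mul, hb2, smul_mul_assoc, sub_mul, one_mul, hfT]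
  module

/-- the three-strand identities -/
theorem bmw_aux_three {z r : ℂ} (hz : z ≠ 0) (hr : r ≠ 0) {a a' e b b' f : R}
    (he : e = 1 - z⁻¹ • (a - a')) (hf : f = 1 - z⁻¹ • (b - b'))
    (ha1 : a * a' = 1) (ha2 : a' * a = 1) (hb1 : b * b' = 1) (hb2 : b' * b = 1)
    (hfT : f * b = r⁻¹ • f)
    (hbr : a * b * a = b * a * b) (hfaf : f * a * f = r • f) (hfa'f : f * a' * f = r⁻¹ • f) :
    f * e * f = f ∧
    b * a * f = e * f ∧
    f * a * b = f * e ∧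
    b * e * f = a * f + z • (e * f) - z • f ∧
    f * e * b = f * a + z • (f * e) - z • f ∧
    b * e * b = a' * f * a + z • (b * e) - z • (b * e * f) := by
  obtain ⟨hbf, hfb', hb'f, hff⟩ := bmw_aux_e hr hf hb1 hb2 hfT
  have hb := bmw_aux_TS hz hf
  have c1 : b * a * f = e * (b * a) :=
    bmw_aux_conj he hf ha2 hb1 (by rw [← hbr]; noncomm_ring)
  have c2 : a * b * e = f * (a * b) :=
    bmw_aux_conj hf he hb2 ha1 (by rw [hbr]; noncomm_ring)
  have e1 : f * e * f = f := by
    rw [he, mul_sub, sub_mul, mul_one, hff, mul_smul_comm, smul_mul_assoc, mul_sub f a a', sub_mul (f * a),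
      hfaf, hfa'f]
    module
  have e2 : b * a * f = e * f := by
    have : e = b * a * f * a' * b' := by
      rw [c1]
      calc e = e * (b * (a * a') * b') := by rw [ha1, mul_one, hb1, mul_one]
        _ = _ := by noncomm_ring
    have h : e * f = b * a * (f * a' * (b' * f)) := by
      conv_lhs => rw [this]
      noncomm_ring
    rw [h, hb'f, mul_smul_comm, hfa'f, smul_smul, mul_inv_cancel₀ hr, one_smul]
  have e3 : f * a * b = f * e := by
    have : e = b' * a' * (f * (a * b)) := by
      rw [← c2]
      calc e = b' * (a' * a) * b * e := by rw [ha2, mul_one, hb2, one_mul]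
        _ = _ := by noncomm_ring
    have h : f * e = (f * b') * a' * f * (a * b) := by
      conv_lhs => rw [this]
      noncomm_ring
    rw [h, hfb', smul_mul_assoc, smul_mul_assoc, hfa'f, smul_smul, mul_inv_cancel₀ hr, one_smul]
    noncomm_ring
  have e4 : b' * (e * f) = a * f := by
    rw [← e2, ← mul_assoc, ← mul_assoc, hb2, one_mul]
  have e5 : f * e * b' = f * a := by
    rw [← e3, mul_assoc, hb1, mul_one]
  have e6 : b * e * b' = a' * f * a := by
    calc b * e * b' = a' * a * (b * e * b') := by rw [ha2, one_mul]
      _ = a' * (a * b * e) * b' := by noncomm_ring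
      _ = a' * f * a * (b * b') := by rw [c2]; noncomm_ring
      _ = _ := by rw [hb1, mul_one]
  refine ⟨e1, e2, e3, ?_, ?_, ?_⟩
  · conv_lhs => rw [hb]
    rw [mul_assoc, add_mul, e4, smul_mul_assoc, sub_mul, one_mul, ← mul_assoc f, e1]
    module
  · conv_lhs => rw [hb]
    rw [mul_add, e5, mul_smul_comm, mul_sub, mul_one, e1]
    module
  · conv_lhs => arg 2; rw [hb]
    rw [mul_add, e6, mul_smul_comm, mul_sub, mul_one]
    module

/-- subalgebra generated by the first `k` generators -/
def bmwAuxA (T S : ℕ → R) (k : ℕ) : Subalgebra ℂ R :=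
  Algebra.adjoin ℂ {x | ∃ i < k, x = T i ∨ x = S i}

/-- the span -/
def bmwAuxM (T S E : ℕ → R) (k : ℕ) : Submodule ℂ R :=
  Submodule.span ℂ {x | ∃ a ∈ bmwAuxA T S k, ∃ b ∈ bmwAuxA T S k, ∃ c,
    (c = 1 ∨ c = T k ∨ c = E k) ∧ x = a * c * b}

theorem bmwAuxM_left (T S E : ℕ → R) (k : ℕ) {a x : R} (ha : a ∈ bmwAuxA T S k)
    (hx : x ∈ bmwAuxM T S E k) : a * x ∈ bmwAuxM T S E k := by
  induction hx using Submodule.span_induction with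
  | mem x h =>
    obtain ⟨c, hc, d, hd, m, hm, rfl⟩ := h
    exact Submodule.subset_span ⟨a * c, mul_mem ha hc, d, hd, m, hm, by noncomm_ring⟩
  | zero => simp
  | add x y _ _ h1 h2 => rw [mul_add]; exact add_mem h1 h2
  | smul t x _ h => rw [mul_smul_comm]; exact Submodule.smul_mem _ _ h

theorem bmwAuxM_right (T S E : ℕ → R) (k : ℕ) {a x : R} (ha : a ∈ bmwAuxA T S k)
    (hx : x ∈ bmwAuxM T S E k) : x * a ∈ bmwAuxM T S E k := by
  induction hx using Submodule.span_induction with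
  | mem x h =>
    obtain ⟨c, hc, d, hd, m, hm, rfl⟩ := h
    exact Submodule.subset_span ⟨c, hc, d * a, mul_mem hd ha, m, hm, by noncomm_ring⟩
  | zero => simp
  | add x y _ _ h1 h2 => rw [add_mul]; exact add_mem h1 h2
  | smul t x _ h => rw [smul_mul_assoc]; exact Submodule.smul_mem _ _ h

theorem bmwAuxM_chi (T S E : ℕ → R) (k : ℕ) {c : R} (hc : c = 1 ∨ c = T k ∨ c = E k) :
    c ∈ bmwAuxM T S E k :=
  Submodule.subset_span ⟨1, one_mem _, 1, one_mem _, c, hc, by simp⟩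

theorem bmwAux_main {z r : ℂ} (hz : z ≠ 0) (hr : r ≠ 0) (N : ℕ) (T S E : ℕ → R)
    (hE : ∀ i < N, E i = 1 - z⁻¹ • (T i - S i))
    (hTS : ∀ i < N, T i * S i = 1) (hST : ∀ i < N, S i * T i = 1)
    (hET : ∀ i < N, E i * T i = r⁻¹ • E i)
    (hbr : ∀ i, i + 1 < N → T i * T (i+1) * T i = T (i+1) * T i * T (i+1))
    (hcomm : ∀ i j, i + 2 ≤ j → j < N → T i * T j = T j * T i)
    (hETE : ∀ i, i + 1 < N → E (i+1) * T i * E (i+1) = r • E (i+1))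
    (hESE : ∀ i, i + 1 < N → E (i+1) * S i * E (i+1) = r⁻¹ • E (i+1))
    (k : ℕ) (hk : k < N) : ∀ x ∈ bmwAuxA T S (k+1), x ∈ bmwAuxM T S E k := by
  have hEA : ∀ i k, i < N → i < k → E i ∈ bmwAuxA T S k ∧ T i ∈ bmwAuxA T S k ∧
      S i ∈ bmwAuxA T S k := by
    intro i k hi hik
    have h1 : T i ∈ bmwAuxA T S k := Algebra.subset_adjoin ⟨i, hik, Or.inl rfl⟩
    have h2 : S i ∈ bmwAuxA T S k := Algebra.subset_adjoin ⟨i, hik, Or.inr rfl⟩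
    refine ⟨?_, h1, h2⟩
    rw [hE i hi]
    exact sub_mem (one_mem _) (Subalgebra.smul_mem _ (sub_mem h1 h2) _)
  -- commutation
  have hC : ∀ j, j + 1 < N → ∀ x ∈ bmwAuxA T S j,
      x * T (j+1) = T (j+1) * x ∧ x * E (j+1) = E (j+1) * x := by
    intro j hj x hx
    have key : x * T (j+1) = T (j+1) * x := by
      induction hx using Algebra.adjoin_induction with
      | mem x h =>
        obtain ⟨i, hi, rfl | rfl⟩ := h
        · exact hcomm i (j+1) (by omega) hj
        · have := (bmw_aux_comm (hE i (by omega)) (hTS i (by omega)) (hST i (by omega))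
            (hcomm i (j+1) (by omega) hj).symm).1
          exact this.symm
      | algebraMap t => exact Algebra.commutes t _
      | add x y _ _ h1 h2 => rw [add_mul, mul_add, h1, h2]
      | mul x y _ _ h1 h2 => rw [mul_assoc, h2, ← mul_assoc, h1, mul_assoc]
    exact ⟨key, (bmw_aux_comm (hE (j+1) hj) (hTS _ hj) (hST _ hj) key).2⟩
  -- products of two
  have hX : ∀ k < N, ∀ x y, (x = 1 ∨ x = T k ∨ x = E k) → (y = 1 ∨ y = T k ∨ y = E k) →
      x * y ∈ bmwAuxM T S E k := by
    intro k hk x y hx hy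
    obtain ⟨h1, -, -, h2⟩ := bmw_aux_e hr (hE k hk) (hTS k hk) (hST k hk) (hET k hk)
    have m1 : (1 : R) ∈ bmwAuxM T S E k := bmwAuxM_chi T S E k (Or.inl rfl)
    have mT : T k ∈ bmwAuxM T S E k := bmwAuxM_chi T S E k (Or.inr (Or.inl rfl))
    have mE : E k ∈ bmwAuxM T S E k := bmwAuxM_chi T S E k (Or.inr (Or.inr rfl))
    rcases hx with rfl | rfl | rfl
    · rw [one_mul]; exact bmwAuxM_chi T S E k hy
    · rcases hy with rfl | rfl | rfl
      · rwa [mul_one]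
      · rw [bmw_aux_sq hz (hE k hk) (hST k hk) (hET k hk)]
        exact sub_mem (add_mem m1 (Submodule.smul_mem _ _ mT)) (Submodule.smul_mem _ _ mE)
      · rw [h1]; exact Submodule.smul_mem _ _ mE
    · rcases hy with rfl | rfl | rfl
      · rwa [mul_one]
      · rw [hET k hk]; exact Submodule.smul_mem _ _ mE
      · rw [h2]; exact Submodule.smul_mem _ _ mE
  -- reduction
  have hred : ∀ k < N, (∀ a ∈ bmwAuxA T S k, ∀ x y, (x = 1 ∨ x = T k ∨ x = E k) →
      (y = 1 ∨ y = T k ∨ y = E k) → x * a * y ∈ bmwAuxM T S E k) →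
      ∀ x ∈ bmwAuxA T S (k+1), x ∈ bmwAuxM T S E k := by
    intro k hk H x hx
    have hmul : ∀ x, (x = 1 ∨ x = T k ∨ x = E k) → ∀ m ∈ bmwAuxM T S E k,
        x * m ∈ bmwAuxM T S E k := by
      intro x hx m hm
      induction hm using Submodule.span_induction with
      | mem m h =>
        obtain ⟨c, hc, d, hd, y, hy, rfl⟩ := h
        have := bmwAuxM_right T S E k hd (H c hc x y hx hy)
        simpa only [mul_assoc] using this
      | zero => simp
      | add u v _ _ h1 h2 => rw [mul_add]; exact add_mem h1 h2
      | smul t u _ h => rw [mul_smul_comm]; exact Submodule.smul_mem _ _ h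
    have hall : ∀ m ∈ bmwAuxM T S E k, x * m ∈ bmwAuxM T S E k := by
      induction hx using Algebra.adjoin_induction with
      | mem x h =>
        intro m hm
        obtain ⟨i, hi, h⟩ := h
        by_cases hik : i < k
        · exact bmwAuxM_left T S E k (Algebra.subset_adjoin ⟨i, hik, h⟩) hm
        · obtain rfl : i = k := by omega
          have hT := hmul (T i) (Or.inr (Or.inl rfl)) m hm
          have hE' := hmul (E i) (Or.inr (Or.inr rfl)) m hm
          rcases h with rfl | rfl
          · exact hT
          · have : S i = T i - z • (1 - E i) :=
              eq_sub_of_add_eq (bmw_aux_TS hz (hE i hk)).symm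
            rw [this, sub_mul, smul_mul_assoc, sub_mul, one_mul]
            exact sub_mem hT (Submodule.smul_mem _ _ (sub_mem hm hE'))
      | algebraMap t =>
        intro m hm
        rw [← Algebra.smul_def]; exact Submodule.smul_mem _ _ hm
      | add x y _ _ h1 h2 =>
        intro m hm
        rw [add_mul]; exact add_mem (h1 m hm) (h2 m hm)
      | mul x y _ _ h1 h2 =>
        intro m hm
        rw [mul_assoc]; exact h1 _ (h2 m hm)
    simpa using hall 1 (bmwAuxM_chi T S E k (Or.inl rfl))
  induction k with
  | zero =>
    refine hred 0 hk fun a ha x y hx hy => ?_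
    have hbot : bmwAuxA T S 0 = ⊥ := by
      simp [bmwAuxA]
    rw [hbot, Algebra.mem_bot] at ha
    obtain ⟨t, rfl⟩ := ha
    rw [← Algebra.commutes, mul_assoc, ← Algebra.smul_def]
    exact Submodule.smul_mem _ _ (hX 0 hk x y hx hy)
  | succ j ih =>
    have hj : j < N := by omega
    have ih := ih hj
    refine hred (j+1) hk fun a ha x y hx hy => ?_
    replace ha := ih a ha
    have hsub : bmwAuxA T S j ≤ bmwAuxA T S (j+1) :=
      Algebra.adjoin_mono fun x ⟨i, hi, h⟩ => ⟨i, by omega, h⟩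
    have hcx : ∀ c ∈ bmwAuxA T S j, ∀ x, (x = 1 ∨ x = T (j+1) ∨ x = E (j+1)) →
        c * x = x * c := by
      rintro c hc x (rfl | rfl | rfl)
      · simp
      · exact (hC j hk c hc).1
      · exact (hC j hk c hc).2
    obtain ⟨t1, t2, t3, t4, t5, t6⟩ := bmw_aux_three hz hr (hE j hj) (hE (j+1) hk) (hTS j hj)
      (hST j hj) (hTS _ hk) (hST _ hk) (hET _ hk) (hbr j hk) (hETE j hk) (hESE j hk)
    have mT : T (j+1) ∈ bmwAuxM T S E (j+1) := bmwAuxM_chi T S E _ (Or.inr (Or.inl rfl))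
    have mE : E (j+1) ∈ bmwAuxM T S E (j+1) := bmwAuxM_chi T S E _ (Or.inr (Or.inr rfl))
    obtain ⟨aE, aT, aS⟩ := hEA j (j+1) hj (by omega)
    have p5 : T (j+1) * E j * E (j+1) ∈ bmwAuxM T S E (j+1) := by
      rw [t4]
      exact sub_mem (add_mem (bmwAuxM_left T S E _ aT mE)
        (Submodule.smul_mem _ _ (bmwAuxM_left T S E _ aE mE))) (Submodule.smul_mem _ _ mE)
    have mid : ∀ m, (m = 1 ∨ m = T j ∨ m = E j) → x * m * y ∈ bmwAuxM T S E (j+1) := by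
      intro m hm
      by_cases hm1 : m = 1
      · rw [hm1, mul_one]; exact hX (j+1) hk x y hx hy
      have hmA : m ∈ bmwAuxA T S (j+1) := by
        rcases hm with rfl | rfl | rfl
        · exact one_mem _
        · exact aT
        · exact aE
      have hx0 := bmwAuxM_chi T S E (j+1) hx
      have hy0 := bmwAuxM_chi T S E (j+1) hy
      rcases hx with rfl | hx
      · rw [one_mul]; exact bmwAuxM_left T S E _ hmA hy0
      rcases hy with rfl | hy
      · rw [mul_one]; exact bmwAuxM_right T S E _ hmA hx0
      rcases hm with rfl | rfl | rfl
      · exact absurd rfl hm1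
      · rcases hx with rfl | rfl <;> rcases hy with rfl | rfl
        · rw [← hbr j hk]
          exact bmwAuxM_right T S E _ aT (bmwAuxM_left T S E _ aT mT)
        · rw [t2]; exact bmwAuxM_left T S E _ aE mE
        · rw [t3]; exact bmwAuxM_right T S E _ aE mE
        · rw [hETE j hk]; exact Submodule.smul_mem _ _ mE
      · rcases hx with rfl | rfl <;> rcases hy with rfl | rfl
        · rw [t6]
          exact sub_mem (add_mem (bmwAuxM_right T S E _ aT (bmwAuxM_left T S E _ aS mE))
            (Submodule.smul_mem _ _ (bmwAuxM_right T S E _ aE mT))) (Submodule.smul_mem _ _ p5)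
        · exact p5
        · rw [t5]
          exact sub_mem (add_mem (bmwAuxM_right T S E _ aT mE)
            (Submodule.smul_mem _ _ (bmwAuxM_right T S E _ aE mE))) (Submodule.smul_mem _ _ mE)
        · rw [t1]; exact mE
    clear ih
    induction ha using Submodule.span_induction with
    | mem a h =>
      obtain ⟨c, hc, d, hd, m, hm, rfl⟩ := h
      have : x * (c * m * d) * y = c * (x * m * y) * d := by
        calc x * (c * m * d) * y = (x * c) * m * (d * y) := by noncomm_ring
          _ = _ := by rw [← hcx c hc x hx, hcx d hd y hy]; noncomm_ring
      rw [this]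
      exact bmwAuxM_right T S E _ (hsub hd) (bmwAuxM_left T S E _ (hsub hc) (mid m hm))
    | zero => simp
    | add u v _ _ h1 h2 => rw [mul_add, add_mul]; exact add_mem h1 h2
    | smul t u _ h => rw [mul_smul_comm, smul_mul_assoc]; exact Submodule.smul_mem _ _ h

end BMWaux


/-- Generators of the BMW algebra `D_n(r,q)`: the invertible generators `T_i`
(left summand) and their inverses `S_i = T_i⁻¹` (right summand), `1 ≤ i ≤ n-1`. -/
abbrev BMWGenerators (n : ℕ) := Fin (n - 1) ⊕ Fin (n - 1)

/-- The generator `T_i` in the free algebra. -/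
def bmwT (n : ℕ) (i : Fin (n - 1)) : FreeAlgebra ℂ (BMWGenerators n) :=
  FreeAlgebra.ι ℂ (Sum.inl i)

/-- The generator `S_i = T_i⁻¹` in the free algebra. -/
def bmwS (n : ℕ) (i : Fin (n - 1)) : FreeAlgebra ℂ (BMWGenerators n) :=
  FreeAlgebra.ι ℂ (Sum.inr i)

/-- The element `E_i = 1 - (T_i - S_i)/(q - q⁻¹)` in the free algebra. -/
noncomputable def bmwE (q : ℂ) (n : ℕ) (i : Fin (n - 1)) : FreeAlgebra ℂ (BMWGenerators n) :=
  1 - (q - q⁻¹)⁻¹ • (bmwT n i - bmwS n i)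

/-- The defining relations of the BMW algebra `D_n(r,q)`. -/
inductive BMWRel (r q : ℂ) (n : ℕ) :
    FreeAlgebra ℂ (BMWGenerators n) → FreeAlgebra ℂ (BMWGenerators n) → Prop
  | inv_right (i : Fin (n - 1)) : BMWRel r q n (bmwT n i * bmwS n i) 1
  | inv_left (i : Fin (n - 1)) : BMWRel r q n (bmwS n i * bmwT n i) 1
  | braid (i j : Fin (n - 1)) (h : (i : ℕ) + 1 = (j : ℕ)) :
      BMWRel r q n (bmwT n i * bmwT n j * bmwT n i) (bmwT n j * bmwT n i * bmwT n j)
  | comm (i j : Fin (n - 1)) (h : (i : ℕ) + 2 ≤ (j : ℕ)) :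
      BMWRel r q n (bmwT n i * bmwT n j) (bmwT n j * bmwT n i)
  | eT (i : Fin (n - 1)) : BMWRel r q n (bmwE q n i * bmwT n i) (r⁻¹ • bmwE q n i)
  | eTe (i j : Fin (n - 1)) (h : (i : ℕ) + 1 = (j : ℕ)) :
      BMWRel r q n (bmwE q n j * bmwT n i * bmwE q n j) (r • bmwE q n j)
  | eSe (i j : Fin (n - 1)) (h : (i : ℕ) + 1 = (j : ℕ)) :
      BMWRel r q n (bmwE q n j * bmwS n i * bmwE q n j) (r⁻¹ • bmwE q n j)

/-- The BMW algebra `D_n(r,q)`. -/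
abbrev BMW (r q : ℂ) (n : ℕ) := RingQuot (BMWRel r q n)

/-- The generator `T_i` of `D_n(r,q)`. -/
noncomputable def BMW.T (r q : ℂ) (n : ℕ) (i : Fin (n - 1)) : BMW r q n :=
  RingQuot.mkAlgHom ℂ (BMWRel r q n) (bmwT n i)

/-- The generator `S_i = T_i⁻¹` of `D_n(r,q)`. -/
noncomputable def BMW.S (r q : ℂ) (n : ℕ) (i : Fin (n - 1)) : BMW r q n :=
  RingQuot.mkAlgHom ℂ (BMWRel r q n) (bmwS n i)

/-- The element `E_i` of `D_n(r,q)`. -/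
noncomputable def BMW.E (r q : ℂ) (n : ℕ) (i : Fin (n - 1)) : BMW r q n :=
  RingQuot.mkAlgHom ℂ (BMWRel r q n) (bmwE q n i)

/-- For nonzero `r, q` with `q² ≠ 1` and `n ≥ 2`, letting
`ι : D_n(r,q) → D_{n+1}(r,q)` be the canonical algebra homomorphism (sending `T_i ↦ T_i`
and `S_i ↦ S_i`), the algebra `D_{n+1}(r,q)` is spanned as a ℂ-vector space by the
elements `ι(A)·χ·ι(B)` with `A, B ∈ D_n(r,q)` and `χ ∈ {1, T_n, E_n}`. -/
theorem stmt_15 (r q : ℂ) (hr : r ≠ 0) (hq : q ≠ 0) (hq2 : q ^ 2 ≠ 1)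
    (n : ℕ) (hn : 2 ≤ n)
    (ι : BMW r q n →ₐ[ℂ] BMW r q (n + 1))
    (hιT : ∀ i : Fin (n - 1),
      ι (BMW.T r q n i) = BMW.T r q (n + 1) (Fin.castLE (by omega) i))
    (hιS : ∀ i : Fin (n - 1),
      ι (BMW.S r q n i) = BMW.S r q (n + 1) (Fin.castLE (by omega) i)) :
    Submodule.span ℂ
      {x : BMW r q (n + 1) | ∃ (A B : BMW r q n) (χ : BMW r q (n + 1)),
        (χ = 1 ∨ χ = BMW.T r q (n + 1) ⟨n - 1, by omega⟩ ∨
          χ = BMW.E r q (n + 1) ⟨n - 1, by omega⟩) ∧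
        x = ι A * χ * ι B} = ⊤ := by
  have hz : q - q⁻¹ ≠ 0 := by
    intro h
    apply hq2
    have h2 : q = q⁻¹ := sub_eq_zero.mp h
    calc q ^ 2 = q * q := sq q
      _ = q * q⁻¹ := by rw [← h2]
      _ = 1 := mul_inv_cancel₀ hq
  have hlt : ∀ {i : ℕ}, i < n → i < n + 1 - 1 := fun h => by omega
  let T : ℕ → BMW r q (n + 1) := fun i => if h : i < n then BMW.T r q (n + 1) ⟨i, hlt h⟩ else 0
  let S : ℕ → BMW r q (n + 1) := fun i => if h : i < n then BMW.S r q (n + 1) ⟨i, hlt h⟩ else 0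
  let E : ℕ → BMW r q (n + 1) := fun i => if h : i < n then BMW.E r q (n + 1) ⟨i, hlt h⟩ else 0
  have hT : ∀ i (h : i < n), T i = BMW.T r q (n + 1) ⟨i, hlt h⟩ := fun i h => dif_pos h
  have hS : ∀ i (h : i < n), S i = BMW.S r q (n + 1) ⟨i, hlt h⟩ := fun i h => dif_pos h
  have hE : ∀ i (h : i < n), E i = BMW.E r q (n + 1) ⟨i, hlt h⟩ := fun i h => dif_pos h
  have rel : ∀ {x y}, BMWRel r q (n + 1) x y →
      RingQuot.mkAlgHom ℂ (BMWRel r q (n + 1)) x = RingQuot.mkAlgHom ℂ (BMWRel r q (n + 1)) y :=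
    fun h => RingQuot.mkAlgHom_rel ℂ h
  have main := bmwAux_main hz hr n T S E
    (by
      intro i hi
      rw [hT i hi, hS i hi, hE i hi]
      simp only [BMW.T, BMW.S, BMW.E, bmwE, map_sub, map_one, map_smul])
    (by
      intro i hi
      rw [hT i hi, hS i hi]
      simpa only [BMW.T, BMW.S, map_mul, map_one] using rel (BMWRel.inv_right ⟨i, hlt hi⟩))
    (by
      intro i hi
      rw [hT i hi, hS i hi]
      simpa only [BMW.T, BMW.S, map_mul, map_one] using rel (BMWRel.inv_left ⟨i, hlt hi⟩))
    (by
      intro i hi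
      rw [hT i hi, hE i hi]
      simpa only [BMW.T, BMW.E, map_mul, map_smul] using rel (BMWRel.eT ⟨i, hlt hi⟩))
    (by
      intro i hi
      rw [hT i (by omega), hT (i + 1) hi]
      simpa only [BMW.T, map_mul] using
        rel (BMWRel.braid ⟨i, hlt (by omega)⟩ ⟨i + 1, hlt hi⟩ rfl))
    (by
      intro i j hij hj
      rw [hT i (by omega), hT j hj]
      simpa only [BMW.T, map_mul] using
        rel (BMWRel.comm ⟨i, hlt (by omega)⟩ ⟨j, hlt hj⟩ hij))
    (by
      intro i hi
      rw [hT i (by omega), hE (i + 1) hi]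
      simpa only [BMW.T, BMW.E, map_mul, map_smul] using
        rel (BMWRel.eTe ⟨i, hlt (by omega)⟩ ⟨i + 1, hlt hi⟩ rfl))
    (by
      intro i hi
      rw [hS i (by omega), hE (i + 1) hi]
      simpa only [BMW.S, BMW.E, map_mul, map_smul] using
        rel (BMWRel.eSe ⟨i, hlt (by omega)⟩ ⟨i + 1, hlt hi⟩ rfl))
    (n - 1) (by omega)
  have hn1 : n - 1 + 1 = n := by omega
  rw [hn1] at main
  have htop : ∀ x, x ∈ bmwAuxA T S n := by
    intro x
    obtain ⟨y, rfl⟩ := RingQuot.mkAlgHom_surjective ℂ (BMWRel r q (n + 1)) x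
    induction y using FreeAlgebra.induction with
    | grade0 t => rw [AlgHom.commutes]; exact Subalgebra.algebraMap_mem _ t
    | grade1 g =>
      rcases g with i | i
      · have hi : (i : ℕ) < n := by have := i.2; omega
        exact Algebra.subset_adjoin ⟨i, hi, Or.inl (hT i hi).symm⟩
      · have hi : (i : ℕ) < n := by have := i.2; omega
        exact Algebra.subset_adjoin ⟨i, hi, Or.inr (hS i hi).symm⟩
    | mul a b ha hb => rw [map_mul]; exact mul_mem ha hb
    | add a b ha hb => rw [map_add]; exact add_mem ha hb
  have hrange : bmwAuxA T S (n - 1) ≤ ι.range := by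
    refine Algebra.adjoin_le ?_
    rintro x ⟨i, hi, rfl | rfl⟩
    · exact ⟨BMW.T r q n ⟨i, hi⟩, (hιT ⟨i, hi⟩).trans (hT i (by omega)).symm⟩
    · exact ⟨BMW.S r q n ⟨i, hi⟩, (hιS ⟨i, hi⟩).trans (hS i (by omega)).symm⟩
  rw [eq_top_iff]
  intro x _
  refine Submodule.span_mono ?_ (main x (htop x))
  rintro y ⟨a, ha, b, hb, c, hc, rfl⟩
  obtain ⟨A, rfl⟩ := hrange ha
  obtain ⟨B, rfl⟩ := hrange hb
  refine ⟨A, B, c, ?_, rfl⟩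
  rwa [hT (n - 1) (by omega), hE (n - 1) (by omega)] at hc
end
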